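/- arXiv:1804.03647 — 5 statements merged into one kernel-verified Lean document; each statement's English description precedes it below -/
import Mathlib

section
/- Let L ⊆ ℤ^n be a positive lattice of rank m. The lattice ideal I_L is a complete intersection if and only if L = ℤB for some dominating matrix B ∈ ℤ^{n×m} (i.e., a matrix with no square mixed submatrices). In this case I_L = ⟨x^{u_+} − x^{u_−} : u a column of B⟩. -/
/-!
`B` has a square mixed submatrix if and only if there is a nonempty set `S` of columns that are all
mixed on a set of at most `|S|` rows.

If `B` is dominating and `a, b ∈ ℕⁿ` differ by a vector `B c`, then some column that occurs in `c`
can be added to `b` with the right sign without leaving `ℕⁿ`: if every occurring column were blocked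
by a row, following blocking rows to columns of opposite sign in that row would yield a cycle, and
the rows and columns of this cycle form a mixed block (`Dominating.exists_step`). By induction,
`x^a - x^b` lies in the ideal of the column binomials (`Dominating.latticeIdeal_eq`).

Conversely, let `I = I_L` be generated by `m` elements and let `𝔪 = (x_1, …, x_n)`. Then at most `m`
binomials of lattice vectors span `I / 𝔪 I`. By Nakayama's lemma there is `r` with constant term `1`
such that these binomials generate an ideal containing `r I`. Let `B` have these lattice vectors as
columns. For a set `C` of rows such that every column is mixed on `C` or vanishes on `C`, the
homomorphism `φ` that sets the variables in `C` to zero and maps to the group algebra of `ℤⁿ`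
modulo the columns that vanish on `C` (`faceHom`) kills `r I`. Positivity of `L` shows that
coefficients of `φ(r)` at classes of elements of `L` are those of `1` (`coeff_faceHom`). Hence
lattice vectors vanishing on `C` are spanned by columns vanishing on `C` (`mem_span_of_vanish`), and
lattice vectors nonnegative on `C` vanish on `C` (`vanish_of_nonneg`). The case `C = ∅` gives
`L = ℤB`. A square mixed submatrix could be enlarged to such a `C` with at least `|C|` columns that
are mixed on `C` (`exists_saturated`), which contradicts the two statements by linear algebra
(`dominating_of_local_generators`).
-/

open MvPolynomial

section LatticeDefs

variable {V κ : Type*}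

/-- The exponent vector of the positive part `u₊` of an integer vector `u`. -/
noncomputable def posExp [Fintype V] (u : V → ℤ) : V →₀ ℕ :=
  Finsupp.equivFunOnFinite.symm fun i => (u i).toNat

/-- The exponent vector of the negative part `u₋` of an integer vector `u`. -/
noncomputable def negExp [Fintype V] (u : V → ℤ) : V →₀ ℕ :=
  Finsupp.equivFunOnFinite.symm fun i => (-u i).toNat

/-- The binomial `x^{u₊} - x^{u₋}` associated to an integer vector `u`. -/
noncomputable def latticeBinomial (k : Type*) [CommRing k] [Fintype V] (u : V → ℤ) :
    MvPolynomial V k :=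
  monomial (posExp u) (1 : k) - monomial (negExp u) (1 : k)

/-- The lattice ideal `I_L = ⟨x^{u₊} - x^{u₋} : u ∈ L⟩` of a lattice `L ⊆ ℤ^V`. -/
noncomputable def latticeIdeal (k : Type*) [CommRing k] [Fintype V]
    (L : Submodule ℤ (V → ℤ)) : Ideal (MvPolynomial V k) :=
  Ideal.span {p | ∃ u ∈ L, p = latticeBinomial k u}

/-- A lattice `L ⊆ ℤ^V` is positive if `L ∩ ℕ^V = {0}`. -/
def IsPositiveLattice (L : Submodule ℤ (V → ℤ)) : Prop :=
  ∀ u ∈ L, (∀ i, 0 ≤ u i) → u = 0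

/-- The rank of a lattice. -/
noncomputable def latticeRank (L : Submodule ℤ (V → ℤ)) : ℕ :=
  Module.finrank ℤ L

/-- The lattice `ℤB` spanned by the columns of an integer matrix `B`. -/
def colSpan [Fintype κ] (B : Matrix V κ ℤ) : Submodule ℤ (V → ℤ) :=
  LinearMap.range B.mulVecLin

/-- The ideal `I` can be generated by `m` elements (`I` is a complete intersection when
`m` is the codimension of `I`). -/
def IsCI {R : Type*} [CommRing R] (I : Ideal R) (m : ℕ) : Prop :=
  ∃ f : Fin m → R, Ideal.span (Set.range f) = I

/-- A matrix is mixed if every column contains a strictly positive and a strictly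
negative entry. -/
def Mixed (B : Matrix V κ ℤ) : Prop :=
  ∀ j, (∃ i, 0 < B i j) ∧ (∃ i, B i j < 0)

/-- A matrix is dominating if it contains no square mixed submatrices. -/
def Dominating {a b : ℕ} (B : Matrix (Fin a) (Fin b) ℤ) : Prop :=
  ∀ s : ℕ, s ≠ 0 → ∀ (r : Fin s → Fin a) (c : Fin s → Fin b),
    Function.Injective r → Function.Injective c → ¬ Mixed (B.submatrix r c)

/-- The columns of `B` form a `ℤ`-basis of the lattice `L` (so that the rows of `B`
are a Gale diagram of `L`). -/
def IsLatticeBasis {n m : ℕ} (L : Submodule ℤ (Fin n → ℤ)) (B : Matrix (Fin n) (Fin m) ℤ) :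
    Prop :=
  LinearIndependent ℤ (fun j : Fin m => fun i => B i j) ∧ colSpan B = L

/-- The Gale diagram given by the rows of `B` is imbalanced: each row has `b_{i1} = 0`
or `b_{i2} ≥ 0`. -/
def Imbalanced {n : ℕ} (B : Matrix (Fin n) (Fin 2) ℤ) : Prop :=
  ∀ i, B i 0 = 0 ∨ 0 ≤ B i 1

/-- The rows of `B` meet all four open quadrants of `ℝ²`. -/
def MeetsFourQuadrants {n : ℕ} (B : Matrix (Fin n) (Fin 2) ℤ) : Prop :=
  (∃ i, 0 < B i 0 ∧ 0 < B i 1) ∧ (∃ i, 0 < B i 0 ∧ B i 1 < 0) ∧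
    (∃ i, B i 0 < 0 ∧ 0 < B i 1) ∧ (∃ i, B i 0 < 0 ∧ B i 1 < 0)

/-- The saturation `L^sat = {u : m • u ∈ L for some positive integer m}` of a lattice. -/
noncomputable def saturation (L : Submodule ℤ (V → ℤ)) : Submodule ℤ (V → ℤ) where
  carrier := {u | ∃ m : ℕ, 0 < m ∧ (m : ℤ) • u ∈ L}
  zero_mem' := ⟨1, one_pos, by simp⟩
  add_mem' := by
    rintro a b ⟨p, hp, hpa⟩ ⟨q, hq, hqb⟩
    refine ⟨p * q, Nat.mul_pos hp hq, ?_⟩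
    have ha : ((p * q : ℕ) : ℤ) • a ∈ L := by
      have h : ((p * q : ℕ) : ℤ) • a = (q : ℤ) • ((p : ℤ) • a) := by
        rw [smul_smul]; push_cast; rw [mul_comm]
      rw [h]; exact L.smul_mem _ hpa
    have hb : ((p * q : ℕ) : ℤ) • b ∈ L := by
      have h : ((p * q : ℕ) : ℤ) • b = (p : ℤ) • ((q : ℤ) • b) := by
        rw [smul_smul]; push_cast; ring_nf
      rw [h]; exact L.smul_mem _ hqb
    rw [smul_add]
    exact L.add_mem ha hb
  smul_mem' := by
    rintro c a ⟨p, hp, hpa⟩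
    exact ⟨p, hp, by rw [smul_comm]; exact L.smul_mem _ hpa⟩

/-- The data `(σ, A, p)` of a finite free resolution of `k[x]/I`:
`⋯ → k[x]^{σ(j+1)} --A j--> k[x]^{σ j} → ⋯ → k[x]^{σ 0} --v ↦ Σ v g * p g--> k[x]/I → 0`
is exact. -/
def IsFreeResolution (k : Type*) [Field k] [Fintype V]
    (I : Ideal (MvPolynomial V k)) (σ : ℕ → Type) [∀ j, Fintype (σ j)]
    (A : ∀ j, Matrix (σ j) (σ (j + 1)) (MvPolynomial V k))
    (p : σ 0 → MvPolynomial V k) : Prop :=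
  Ideal.span (Set.range p) ⊔ I = ⊤ ∧
    (∀ v : σ 0 → MvPolynomial V k,
      (∑ g, v g * p g) ∈ I ↔ v ∈ LinearMap.range (A 0).mulVecLin) ∧
    ∀ j, LinearMap.ker (A j).mulVecLin = LinearMap.range (A (j + 1)).mulVecLin

/-- `k[x]/I` admits a free resolution of length at most `m`. -/
def HasFreeResolutionOfLength (k : Type*) [Field k] [Fintype V]
    (I : Ideal (MvPolynomial V k)) (m : ℕ) : Prop :=
  ∃ (σ : ℕ → Type) (hfin : ∀ j, Fintype (σ j))
    (A : ∀ j, Matrix (σ j) (σ (j + 1)) (MvPolynomial V k))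
    (p : σ 0 → MvPolynomial V k),
    (∀ j, m < j → IsEmpty (σ j)) ∧ @IsFreeResolution V k _ _ I σ hfin A p

/-- Cohen–Macaulayness of `k[x]/I_L` for a positive lattice `L`, via the
Auslander–Buchsbaum characterization: the quotient is Cohen–Macaulay if and only if its
projective dimension over `k[x]` equals the codimension `rank L` of `I_L`, i.e. iff it
admits a free resolution of length `rank L`. -/
def IsCMLatticeQuotient (k : Type*) [Field k] [Fintype V]
    (L : Submodule ℤ (V → ℤ)) : Prop :=
  HasFreeResolutionOfLength k (latticeIdeal k L) (latticeRank L)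

/-- The degree in `Γ = ℤ^V/L` of the monomial with exponent vector `u`. -/
noncomputable def degQ [Fintype V] (L : Submodule ℤ (V → ℤ)) (u : V →₀ ℕ) :
    (V → ℤ) ⧸ L :=
  Submodule.Quotient.mk fun i => (u i : ℤ)

/-- The data `(σ, deg, A, p)` is a minimal free resolution of `k[x]/I_L`, graded by
`Γ = ℤ^V/L`: a free resolution in which all differentials (and the augmentation) are
homogeneous for the degrees `deg` of the generators and have entries with zero constant
term.  The `Γ`-graded Betti number `β_{j,C}` of `k[x]/I_L` is then the number of
generators `g : σ j` with `deg j g = C`. -/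
def IsMinimalGradedFreeResolution (k : Type*) [Field k] [Fintype V]
    (L : Submodule ℤ (V → ℤ)) (σ : ℕ → Type) [∀ j, Fintype (σ j)]
    (deg : ∀ j, σ j → ((V → ℤ) ⧸ L))
    (A : ∀ j, Matrix (σ j) (σ (j + 1)) (MvPolynomial V k))
    (p : σ 0 → MvPolynomial V k) : Prop :=
  IsFreeResolution k (latticeIdeal k L) σ A p ∧
    (∀ g, ∀ u ∈ (p g).support, degQ L u = deg 0 g) ∧
    (∀ j g f, ∀ u ∈ (A j g f).support, degQ L u + deg j g = deg (j + 1) f) ∧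
    ∀ j g f, MvPolynomial.coeff 0 (A j g f) = 0

/-- `F` is a face of the simplicial complex `Δ_C` attached to the fiber `C = c + L`:
the fiber contains a coordinatewise nonnegative vector whose support contains `F`. -/
def FaceOf (L : Submodule ℤ (V → ℤ)) (c : V → ℤ) (F : Finset V) : Prop :=
  ∃ a : V → ℤ, (∀ i, 0 ≤ a i) ∧ a - c ∈ L ∧ ∀ i ∈ F, a i ≠ 0

/-- The simplicial boundary matrix of the complex whose faces are given by `P`, from
chains on `(d+1)`-element faces to chains on `d`-element faces. -/
noncomputable def boundaryMatrix (k : Type*) [Field k] [LinearOrder V]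
    (P : Finset V → Prop) (d : ℕ) :
    Matrix {F : Finset V // P F ∧ F.card = d} {F : Finset V // P F ∧ F.card = d + 1} k :=
  fun G F =>
    if G.1 ⊆ F.1 then
      ∑ i ∈ F.1 \ G.1, (-1 : k) ^ (F.1.filter fun x => x < i).card
    else 0

/-- The rank of the `j`-th reduced simplicial homology, with coefficients in `k`, of the
simplicial complex whose faces are given by `P`:
`dim ker ∂_j - dim im ∂_{j+1}` where chains in homological degree `j` live on faces with
`j+1` elements. -/
noncomputable def reducedHomologyRank (k : Type*) [Field k] [Fintype V] [LinearOrder V]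
    (P : Finset V → Prop) (j : ℕ) : ℕ :=
  letI : Fintype {F : Finset V // P F ∧ F.card = j + 1} := Fintype.ofFinite _
  letI : Fintype {F : Finset V // P F ∧ F.card = j + 1 + 1} := Fintype.ofFinite _
  Fintype.card {F : Finset V // P F ∧ F.card = j + 1} -
    (boundaryMatrix k P j).rank - (boundaryMatrix k P (j + 1)).rank

end LatticeDefs

/-! ### Dominating matrices give generators -/

lemma monomial_sub_eq {V : Type*} (k : Type*) [CommRing k] [Fintype V] (a b : V →₀ ℕ) (u : V → ℤ)
    (h : ∀ i, (a i : ℤ) = b i + u i) :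
    monomial a (1 : k) - monomial b 1 = monomial (a - posExp u) 1 * latticeBinomial k u := by
  have h1 : a - posExp u + posExp u = a := by
    ext i
    have := h i
    simp [posExp]
    omega
  have h2 : a - posExp u + negExp u = b := by
    ext i
    have := h i
    simp [posExp, negExp]
    omega
  rw [latticeBinomial, mul_sub, monomial_mul, monomial_mul, h1, h2, one_mul]

/-- A dominating matrix has no nonempty set `S` of columns that are all mixed on a set of at most
`|S|` rows; when there are fewer rows than columns, superfluous columns are discarded. -/
lemma Dominating.not_mixed_on {n m : ℕ} {B : Matrix (Fin n) (Fin m) ℤ} (hB : Dominating B)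
    {R : Finset (Fin n)} {S : Finset (Fin m)} (hS : S.Nonempty) (hcard : R.card ≤ S.card)
    (hmix : ∀ j ∈ S, (∃ i ∈ R, 0 < B i j) ∧ ∃ i ∈ R, B i j < 0) : False := by
  have hR : R.card ≠ 0 := by
    obtain ⟨j, hj⟩ := hS
    obtain ⟨⟨i, hi, -⟩, -⟩ := hmix j hj
    exact Finset.card_ne_zero_of_mem hi
  obtain ⟨S', hS', hc⟩ := Finset.exists_subset_card_eq hcard
  refine hB R.card hR (R.orderEmbOfFin rfl) (S'.orderEmbOfFin hc)
    (R.orderEmbOfFin rfl).injective (S'.orderEmbOfFin hc).injective fun t => ?_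
  obtain ⟨⟨p, hp, hpp⟩, ⟨q, hq, hqn⟩⟩ := hmix _ (hS' (S'.orderEmbOfFin_mem hc t))
  have key : ∀ i ∈ R, ∃ t, R.orderEmbOfFin rfl t = i := fun i hi => by
    have := R.range_orderEmbOfFin rfl
    rw [← Finset.mem_coe, ← this] at hi
    exact hi
  obtain ⟨p, rfl⟩ := key p hp
  obtain ⟨q, rfl⟩ := key q hq
  exact ⟨⟨p, hpp⟩, ⟨q, hqn⟩⟩

/-- A self-map of a nonempty finite set permutes some nonempty subset (the union of its cycles). -/
lemma exists_image_eq {α : Type*} [DecidableEq α] (f : α → α) (S : Finset α) (hS : S.Nonempty)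
    (hf : ∀ j ∈ S, f j ∈ S) : ∃ S' ⊆ S, S'.Nonempty ∧ S'.image f = S' := by
  induction S using Finset.strongInduction with
  | H S ih =>
    by_cases h : S.image f = S
    · exact ⟨S, subset_rfl, hS, h⟩
    · have hsub : S.image f ⊆ S := Finset.image_subset_iff.2 hf
      obtain ⟨S', h1, h2⟩ := ih _ (lt_of_le_of_ne hsub h) (hS.image f)
        (fun j hj => Finset.mem_image_of_mem f (hsub hj))
      exact ⟨S', h1.trans hsub, h2⟩

/-- Write `a = b + B c` with `a, b ∈ ℕⁿ` and `c ≠ 0`. Some column that occurs in `c` can be added to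
`b`, with the sign of its coefficient, without leaving `ℕⁿ`.

Otherwise each occurring column `j` is blocked by a row `row j`, where its signed entry is negative.
As `a` is nonnegative in that row, another occurring column `next j` has a positive signed entry
there. On a set `S` of columns permuted by `next`, all columns are mixed in the rows that block them. -/
lemma Dominating.exists_step {n m : ℕ} {B : Matrix (Fin n) (Fin m) ℤ} (hB : Dominating B)
    (b : Fin n → ℕ) (c : Fin m → ℤ) (hc : c ≠ 0) (ha : ∀ i, 0 ≤ (b i : ℤ) + ∑ j, B i j * c j) :
    ∃ j, c j ≠ 0 ∧ ∀ i, 0 ≤ (b i : ℤ) + B i j * (c j).sign := by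
  by_contra! hcon
  obtain ⟨j₀, hj₀⟩ := Function.ne_iff.1 hc
  have : Nonempty (Fin n) := ⟨(hcon j₀ hj₀).choose⟩
  choose! row hrow using hcon
  have hnext : ∀ j, c j ≠ 0 → ∃ j', 0 < B (row j) j' * c j' := by
    intro j hj
    by_contra! hno
    have h1 : ∑ j', B (row j) j' * c j' ≤ B (row j) j * c j := by
      rw [← Finset.add_sum_erase _ _ (Finset.mem_univ j)]
      have := Finset.sum_nonpos (s := Finset.univ.erase j) fun j' _ => hno j'
      linarith
    have h2 := ha (row j)
    have h3 := hrow j hj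
    have h4 : B (row j) j * c j ≤ B (row j) j * (c j).sign := by
      rcases lt_or_gt_of_ne hj with h | h
      · rw [Int.sign_eq_neg_one_of_neg h] at h3 ⊢
        nlinarith [(b (row j)).cast_nonneg (α := ℤ)]
      · rw [Int.sign_eq_one_of_pos h] at h3 ⊢
        nlinarith [(b (row j)).cast_nonneg (α := ℤ)]
    linarith
  choose! next hnext using hnext
  have hne : ∀ j, c j ≠ 0 → c (next j) ≠ 0 := fun j hj h => by
    have := hnext j hj
    simp [h] at this
  obtain ⟨S, hSsub, hSne, hS⟩ := exists_image_eq next (Finset.univ.filter fun j => c j ≠ 0)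
    ⟨j₀, by simpa using hj₀⟩ (by simpa using hne)
  refine hB.not_mixed_on (R := S.image row) hSne Finset.card_image_le fun j hj => ?_
  have hcj : c j ≠ 0 := by simpa using hSsub hj
  obtain ⟨j', hj', hjj'⟩ : ∃ j' ∈ S, next j' = j := by
    rw [← hS] at hj
    simpa using hj
  have hp : 0 < B (row j') j * c j := hjj' ▸ hnext j' (by simpa using hSsub hj')
  have hn : B (row j) j * (c j).sign < 0 := by
    have := hrow j hcj
    have := (b (row j)).cast_nonneg (α := ℤ)
    linarith
  have hm := Finset.mem_image_of_mem row hj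
  have hm' := Finset.mem_image_of_mem row hj'
  rcases lt_or_gt_of_ne hcj with h | h
  · rw [Int.sign_eq_neg_one_of_neg h] at hn
    exact ⟨⟨_, hm, by linarith⟩, ⟨_, hm', by nlinarith⟩⟩
  · rw [Int.sign_eq_one_of_pos h] at hn
    exact ⟨⟨_, hm', by nlinarith⟩, ⟨_, hm, by linarith⟩⟩

/-- Two monomials whose exponents differ by an element `B c` of the lattice are congruent modulo the
column binomials; the induction is on the `ℓ¹`-norm `N` of the coefficient vector `c`. -/
lemma Dominating.monomial_sub_mem (k : Type*) [CommRing k] {n m : ℕ}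
    {B : Matrix (Fin n) (Fin m) ℤ} (hB : Dominating B) (N : ℕ) :
    ∀ (c : Fin m → ℤ) (a b : Fin n →₀ ℕ), ∑ j, (c j).natAbs = N →
      (∀ i, (a i : ℤ) = b i + ∑ j, B i j * c j) →
      monomial a (1 : k) - monomial b 1 ∈
        Ideal.span (Set.range fun j : Fin m => latticeBinomial k fun i => B i j) := by
  induction N with
  | zero =>
    intro c a b hN hab
    have hc : ∀ j, c j = 0 := by simpa using hN
    have : a = b := by
      ext i
      have := hab i
      simp [hc] at this
      exact this
    simp [this]
  | succ N ih =>
    intro c a b hN hab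
    have hc : c ≠ 0 := by rintro rfl; simp at hN
    obtain ⟨j, hj, hstep⟩ := hB.exists_step b c hc fun i => by rw [← hab]; positivity
    let b' : Fin n →₀ ℕ :=
      Finsupp.equivFunOnFinite.symm fun i => ((b i : ℤ) + B i j * (c j).sign).toNat
    have hb' : ∀ i, (b' i : ℤ) = b i + B i j * (c j).sign := fun i => by
      simpa [b'] using hstep i
    let c' : Fin m → ℤ := Function.update c j (c j - (c j).sign)
    have hc'N : ∑ j, (c' j).natAbs = N := by
      rw [← Finset.add_sum_erase _ _ (Finset.mem_univ j)] at hN ⊢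
      have h1 : ∑ x ∈ Finset.univ.erase j, (c' x).natAbs
          = ∑ x ∈ Finset.univ.erase j, (c x).natAbs :=
        Finset.sum_congr rfl fun x hx => by simp [c', Finset.ne_of_mem_erase hx]
      have h2 : (c' j).natAbs + 1 = (c j).natAbs := by
        simp only [c', Function.update_self]
        rcases lt_or_gt_of_ne hj with h | h
        · rw [Int.sign_eq_neg_one_of_neg h]; omega
        · rw [Int.sign_eq_one_of_pos h]; omega
      omega
    have hab' : ∀ i, (a i : ℤ) = b' i + ∑ j, B i j * c' j := fun i => by
      have h1 : ∑ x ∈ Finset.univ.erase j, B i x * c' x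
          = ∑ x ∈ Finset.univ.erase j, B i x * c x :=
        Finset.sum_congr rfl fun x hx => by simp [c', Finset.ne_of_mem_erase hx]
      rw [hab i, hb' i, ← Finset.add_sum_erase _ _ (Finset.mem_univ j),
        ← Finset.add_sum_erase _ (fun x => B i x * c' x) (Finset.mem_univ j), h1]
      simp only [c', Function.update_self]
      ring
    have h1 := ih c' a b' hc'N hab'
    have hgen : latticeBinomial k (fun i => B i j) ∈
        Ideal.span (Set.range fun j : Fin m => latticeBinomial k fun i => B i j) :=
      Ideal.subset_span ⟨j, rfl⟩
    have h2 : monomial b' (1 : k) - monomial b 1 ∈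
        Ideal.span (Set.range fun j : Fin m => latticeBinomial k fun i => B i j) := by
      rcases lt_or_gt_of_ne hj with h | h
      · rw [Int.sign_eq_neg_one_of_neg h] at hb'
        rw [← neg_sub, monomial_sub_eq k b b' (fun i => B i j) fun i => by rw [hb']; ring]
        exact neg_mem (Ideal.mul_mem_left _ _ hgen)
      · rw [Int.sign_eq_one_of_pos h] at hb'
        rw [monomial_sub_eq k b' b (fun i => B i j) fun i => by rw [hb']; ring]
        exact Ideal.mul_mem_left _ _ hgen
    have := add_mem h1 h2
    rwa [sub_add_sub_cancel] at this

lemma column_mem_colSpan {n m : ℕ} (B : Matrix (Fin n) (Fin m) ℤ) (j : Fin m) :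
    (fun i => B i j) ∈ colSpan B :=
  ⟨Pi.single j 1, by ext i; simp [Matrix.col]⟩

lemma Dominating.latticeIdeal_eq (k : Type*) [CommRing k] {n m : ℕ}
    {B : Matrix (Fin n) (Fin m) ℤ} (hB : Dominating B) :
    latticeIdeal k (colSpan B) =
      Ideal.span (Set.range fun j : Fin m => latticeBinomial k fun i => B i j) := by
  apply le_antisymm
  · rw [latticeIdeal, Ideal.span_le]
    rintro _ ⟨_, ⟨c, rfl⟩, rfl⟩
    refine hB.monomial_sub_mem k _ c _ _ rfl fun i => ?_
    simp only [posExp, negExp, Finsupp.equivFunOnFinite_symm_apply_apply,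
      Matrix.mulVecLin_apply, Matrix.mulVec, dotProduct]
    omega
  · rw [Ideal.span_le]
    rintro _ ⟨j, rfl⟩
    exact Ideal.subset_span ⟨_, column_mem_colSpan B j, rfl⟩

/-! ### Few binomials generate the ideal locally -/

/-- Any generating set `s` of an ideal generated by `m` elements contains at most `m` elements that
generate the ideal `I` modulo `M I`: a basis of the `R ⧸ M`-vector space `I ⧸ M I` can be chosen
among the images of the elements of `s`. -/
lemma exists_subset_card_le_span_le_sup {R : Type*} [CommRing R] (M : Ideal R) [M.IsMaximal]
    {m : ℕ} (f : Fin m → R) (s : Set R) (h : Ideal.span (Set.range f) = Ideal.span s) :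
    ∃ t : Finset R, ↑t ⊆ s ∧ t.card ≤ m ∧
      Ideal.span s ≤ Ideal.span (t : Set R) ⊔ M • Ideal.span s := by
  classical
  let _ : Field (R ⧸ M) := Ideal.Quotient.field M
  set I := Ideal.span s with hI
  let W := I ⧸ (M • ⊤ : Submodule R I)
  let π : I →ₗ[R] W := Submodule.mkQ _
  have hπ : Function.Surjective π := Submodule.mkQ_surjective _
  have hsurj : Function.Surjective (algebraMap R (R ⧸ M)) := Ideal.Quotient.mk_surjective
  have span_top : ∀ v : Set I, Submodule.span R v = ⊤ → Submodule.span (R ⧸ M) (π '' v) = ⊤ := by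
    intro v hv
    have h1 : Submodule.span R (π '' v) = ⊤ := by
      rw [← Submodule.map_span, hv, Submodule.map_top, LinearMap.range_eq_top.2 hπ]
    rw [← Submodule.restrictScalars_eq_top_iff R, Submodule.restrictScalars_span _ _ hsurj, h1]
  have lift_top : ∀ v : Set R, ∀ hv : v ⊆ I, Ideal.span v = I →
      Submodule.span R (((↑) : I → R) ⁻¹' v) = ⊤ := by
    intro v hv hvI
    apply Submodule.map_injective_of_injective I.injective_subtype
    rw [Submodule.map_span, Submodule.map_top, Submodule.range_subtype]
    have himage : I.subtype '' (((↑) : I → R) ⁻¹' v) = v :=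
      Set.image_preimage_eq_of_subset (by simpa using hv)
    rw [himage]
    exact hvI
  have hf := span_top _ (lift_top _ (h ▸ Ideal.subset_span) h)
  have hs := span_top _ (lift_top s Ideal.subset_span rfl)
  have hfin : (π '' (((↑) : I → R) ⁻¹' Set.range f)).Finite :=
    ((Set.finite_range f).preimage Subtype.val_injective.injOn).image _
  have hcardf : (π '' (((↑) : I → R) ⁻¹' Set.range f)).ncard ≤ m := by
    calc _ ≤ (((↑) : I → R) ⁻¹' Set.range f).ncard :=
          Set.ncard_image_le ((Set.finite_range f).preimage Subtype.val_injective.injOn)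
      _ = (((↑) : I → R) '' (((↑) : I → R) ⁻¹' Set.range f)).ncard :=
          (Set.ncard_image_of_injective _ Subtype.val_injective).symm
      _ ≤ (Set.range f).ncard := Set.ncard_le_ncard (Set.image_preimage_subset _ _)
      _ ≤ m := by
          rw [← Set.image_univ]
          exact (Set.ncard_image_le).trans (by simp [Set.ncard_univ])
  have : Module.Finite (R ⧸ M) W := ⟨⟨hfin.toFinset, by simpa using hf⟩⟩
  have hrank : Module.finrank (R ⧸ M) W ≤ m := by
    rw [← finrank_top, ← hf]
    have := hfin.fintype
    refine (finrank_span_le_card _).trans ?_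
    rwa [← Set.ncard_eq_toFinset_card']
  obtain ⟨b, hbs, hbspan, hbli⟩ := exists_linearIndependent (R ⧸ M) (π '' (((↑) : I → R) ⁻¹' s))
  rw [hs] at hbspan
  have hbfin : b.Finite := hbli.setFinite
  have := hbfin.fintype
  have hbcard : b.toFinset.card ≤ m := by
    rw [Set.toFinset_card]
    exact hbli.fintype_card_le_finrank.trans hrank
  have hlift : ∀ w ∈ b, ∃ x : I, (x : R) ∈ s ∧ π x = w := fun w hw => hbs hw
  choose! g hg using hlift
  refine ⟨b.toFinset.image fun w => (g w : R), ?_, Finset.card_image_le.trans hbcard, ?_⟩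
  · intro x hx
    simp only [Finset.coe_image, Set.coe_toFinset, Set.mem_image] at hx
    obtain ⟨w, hw, rfl⟩ := hx
    exact (hg _ hw).1
  · have hb2 : b = π '' (g '' b) := by
      rw [Set.image_image]
      ext w
      constructor
      · exact fun hw => ⟨w, hw, (hg _ hw).2⟩
      · rintro ⟨w', hw', rfl⟩
        simpa only [(hg _ hw').2] using hw'
    have hbR : (Submodule.span R (g '' b)).map π = ⊤ := by
      rw [Submodule.map_span, ← hb2, ← Submodule.restrictScalars_span R (R ⧸ M) hsurj, hbspan]
      rfl
    have htop : Submodule.span R (g '' b) ⊔ (M • ⊤ : Submodule R I) = ⊤ := by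
      have := congrArg (Submodule.comap π) hbR
      rwa [Submodule.comap_map_eq, Submodule.ker_mkQ, Submodule.comap_top] at this
    have := congrArg (Submodule.map I.subtype) htop
    rw [Submodule.map_sup, Submodule.map_smul'', Submodule.map_top, Submodule.range_subtype,
      Submodule.map_span, Set.image_image] at this
    refine this.ge.trans (le_of_eq ?_)
    simp [Ideal.span]


/-! ### Restriction to a coordinate face -/

/-- The homomorphism from `k[x]` to the group algebra of `ℤⁿ ⧸ H` that kills the variables `x_i` with
`i ∈ C` and sends every other `x_i` to the class of the `i`-th unit vector. -/
noncomputable def faceHom (k : Type*) [Field k] {n : ℕ} (H : Submodule ℤ (Fin n → ℤ))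
    (C : Finset (Fin n)) :
    MvPolynomial (Fin n) k →ₐ[k] AddMonoidAlgebra k ((Fin n → ℤ) ⧸ H) :=
  aeval fun i => if i ∈ C then 0 else
    AddMonoidAlgebra.single (Submodule.Quotient.mk (Pi.single i 1)) 1

section FaceHom

variable {k : Type*} [Field k] {n : ℕ} {H : Submodule ℤ (Fin n → ℤ)} {C : Finset (Fin n)}

lemma faceHom_monomial_of_zero {a : Fin n →₀ ℕ} (c : k) (ha : ∀ i ∈ C, a i = 0) :
    faceHom k H C (monomial a c) = AddMonoidAlgebra.single (degQ H a) c := by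
  have hterm : ∀ i, (if i ∈ C then (0 : AddMonoidAlgebra k ((Fin n → ℤ) ⧸ H)) else
      AddMonoidAlgebra.single (Submodule.Quotient.mk (Pi.single i 1)) 1) ^ a i =
      AddMonoidAlgebra.single (a i • Submodule.Quotient.mk (Pi.single i 1)) 1 := fun i => by
    by_cases hi : i ∈ C
    · simp [ha i hi, AddMonoidAlgebra.one_def]
    · simp [hi, AddMonoidAlgebra.single_pow]
  have hprod : ∀ s : Finset (Fin n),
      ∏ i ∈ s, (AddMonoidAlgebra.single
        (a i • (Submodule.Quotient.mk (Pi.single i 1) : (Fin n → ℤ) ⧸ H)) (1 : k)) =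
      AddMonoidAlgebra.single
        (∑ i ∈ s, a i • (Submodule.Quotient.mk (Pi.single i 1) : (Fin n → ℤ) ⧸ H)) 1 := by
    intro s
    induction s using Finset.induction_on with
    | empty => simp [AddMonoidAlgebra.one_def]
    | insert i s hi ih =>
      rw [Finset.prod_insert hi, Finset.sum_insert hi, ih, AddMonoidAlgebra.single_mul_single,
        one_mul]
  have hdeg : ∑ i, a i • (Submodule.Quotient.mk (Pi.single i 1) : (Fin n → ℤ) ⧸ H) =
      degQ H a := by
    have h1 : (fun i => (a i : ℤ)) = ∑ i, a i • (Pi.single i (1 : ℤ) : Fin n → ℤ) := by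
      ext j
      simp [Finset.sum_apply, Pi.single_apply]
    rw [degQ, h1, ← Submodule.mkQ_apply, map_sum]
    simp only [map_nsmul, Submodule.mkQ_apply]
  rw [faceHom, aeval_monomial, Finsupp.prod_fintype _ _ (by simp),
    Finset.prod_congr rfl fun i _ => hterm i, hprod, hdeg, ← Algebra.smul_def,
    AddMonoidAlgebra.smul_single, smul_eq_mul, mul_one]

lemma faceHom_monomial_of_ne_zero {a : Fin n →₀ ℕ} (c : k) {i : Fin n} (hi : i ∈ C)
    (ha : a i ≠ 0) : faceHom k H C (monomial a c) = 0 := by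
  rw [faceHom, aeval_monomial, Finsupp.prod_fintype _ _ (by simp),
    Finset.prod_eq_zero (Finset.mem_univ i) (by simp [hi, ha]), mul_zero]

lemma degQ_posExp_sub_degQ_negExp (u : Fin n → ℤ) :
    degQ H (posExp u) - degQ H (negExp u) = Submodule.Quotient.mk u := by
  rw [degQ, degQ, ← Submodule.Quotient.mk_sub]
  congr 1
  ext i
  simp [posExp, negExp]

lemma faceHom_latticeBinomial_of_zero {u : Fin n → ℤ} (hu : ∀ i ∈ C, u i = 0) :
    faceHom k H C (latticeBinomial k u) =
      AddMonoidAlgebra.single (degQ H (posExp u)) 1 -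
        AddMonoidAlgebra.single (degQ H (negExp u)) 1 := by
  rw [latticeBinomial, map_sub, faceHom_monomial_of_zero _ fun i hi => by simp [posExp, hu i hi],
    faceHom_monomial_of_zero _ fun i hi => by simp [negExp, hu i hi]]

/-- Positivity of `L ⊇ H` makes the constant the only monomial whose class in `ℤⁿ ⧸ H` comes from
`L`; so the coefficients of `faceHom k H C p` at classes of elements of `L` see only the constant
term of `p`. -/
lemma coeff_faceHom {L : Submodule ℤ (Fin n → ℤ)} (hpos : IsPositiveLattice L) (hH : H ≤ L)
    (p : MvPolynomial (Fin n) k) {v : Fin n → ℤ} (hv : v ∈ L) [Decidable (v ∈ H)] :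
    (faceHom k H C p).coeff (Submodule.Quotient.mk v) =
      if v ∈ H then constantCoeff p else 0 := by
  classical
  induction p using MvPolynomial.induction_on' with
  | add p q hp hq =>
    rw [map_add, AddMonoidAlgebra.coeff_add, Finsupp.add_apply, hp, hq]
    split_ifs <;> simp
  | monomial a c =>
    by_cases ha0 : a = 0
    · subst ha0
      rw [faceHom_monomial_of_zero _ (by simp)]
      have h0 : degQ H (0 : Fin n →₀ ℕ) = 0 := by
        have hfun : (fun i => (((0 : Fin n →₀ ℕ) i : ℕ) : ℤ)) = 0 := by ext; simp
        rw [degQ, hfun, Submodule.Quotient.mk_zero]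
      simp only [h0, AddMonoidAlgebra.coeff_single, Finsupp.single_apply]
      rw [eq_comm (a := (0 : (Fin n → ℤ) ⧸ H)), Submodule.Quotient.mk_eq_zero]
      simp
    · have hcc : constantCoeff (monomial a c) = 0 := by
        rw [constantCoeff_monomial, if_neg ha0]
      rw [hcc, ite_self]
      by_cases hz : ∀ i ∈ C, a i = 0
      · rw [faceHom_monomial_of_zero _ hz, AddMonoidAlgebra.coeff_single, Finsupp.single_apply,
          if_neg]
        intro heq
        rw [degQ, Submodule.Quotient.eq] at heq
        have haL : (fun i => (a i : ℤ)) ∈ L := by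
          have := L.add_mem (hH heq) hv
          rwa [sub_add_cancel] at this
        have := hpos _ haL fun i => by positivity
        exact ha0 (by ext i; simpa using congrFun this i)
      · push Not at hz
        obtain ⟨i, hi, hai⟩ := hz
        rw [faceHom_monomial_of_ne_zero _ hi hai]
        rfl

end FaceHom

/-! ### Local binomial generators form a dominating matrix -/

lemma IsPositiveLattice.exists_pos_and_neg {V : Type*} {L : Submodule ℤ (V → ℤ)}
    (hpos : IsPositiveLattice L) {u : V → ℤ} (hu : u ∈ L) (h0 : u ≠ 0) :
    (∃ i, 0 < u i) ∧ ∃ i, u i < 0 := by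
  constructor
  · by_contra! h
    exact h0 (neg_eq_zero.1 (hpos _ (L.neg_mem hu) fun i => by simpa using h i))
  · by_contra! h
    exact h0 (hpos _ hu h)

section LocalGenerators

variable {k : Type*} [Field k] {n m : ℕ} {L : Submodule ℤ (Fin n → ℤ)}
  {B : Matrix (Fin n) (Fin m) ℤ} {r : MvPolynomial (Fin n) k}

/-- If the column binomials generate `r • I_L`, every column in `U` is mixed on `C`, and all other
columns vanish on `C` and span `H`, then `faceHom k H C` kills `r • I_L`. -/
lemma faceHom_mul_eq_zero
    (hr : ∀ p ∈ latticeIdeal k L, r * p ∈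
      Ideal.span (Set.range fun j : Fin m => latticeBinomial k fun i => B i j))
    {C : Finset (Fin n)} {U : Finset (Fin m)}
    (hU : ∀ j ∈ U, (∃ i ∈ C, 0 < B i j) ∧ ∃ i ∈ C, B i j < 0)
    (hT : ∀ j ∉ U, ∀ i ∈ C, B i j = 0) {u : Fin n → ℤ} (hu : u ∈ L) :
    faceHom k (Submodule.span ℤ ((fun j i => B i j) '' {j | j ∉ U})) C r *
      faceHom k (Submodule.span ℤ ((fun j i => B i j) '' {j | j ∉ U})) C
        (latticeBinomial k u) = 0 := by
  rw [← map_mul, ← RingHom.mem_ker]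
  refine (Ideal.span_le.2 ?_ : _ ≤ _) (hr _ (Ideal.subset_span ⟨u, hu, rfl⟩))
  rintro _ ⟨j, rfl⟩
  rw [SetLike.mem_coe, RingHom.mem_ker]
  by_cases hj : j ∈ U
  · obtain ⟨⟨p, hp, hpp⟩, ⟨q, hq, hqn⟩⟩ := hU j hj
    beta_reduce
    rw [latticeBinomial, map_sub,
      faceHom_monomial_of_ne_zero _ hp (by simpa [posExp] using hpp),
      faceHom_monomial_of_ne_zero _ hq (by simpa [negExp] using hqn), sub_zero]
  · rw [faceHom_latticeBinomial_of_zero (hT j hj), sub_eq_zero]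
    congr 1
    rw [← sub_eq_zero, degQ_posExp_sub_degQ_negExp, Submodule.Quotient.mk_eq_zero]
    exact Submodule.subset_span ⟨j, hj, rfl⟩

/-- Under the same hypotheses on `C` and `U`, where `r` has constant term `1`, the lattice vectors that
vanish on `C` are spanned by the columns outside `U`: comparing coefficients at the class of `u₊`
in `φ(r) ([u₊] - [u₋]) = 0` shows that `φ(r)` has coefficient `1` at the class of `u`. -/
lemma mem_span_of_vanish (hpos : IsPositiveLattice L) (hBL : ∀ j, (fun i => B i j) ∈ L)
    (hr1 : constantCoeff r = 1)
    (hr : ∀ p ∈ latticeIdeal k L, r * p ∈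
      Ideal.span (Set.range fun j : Fin m => latticeBinomial k fun i => B i j))
    {C : Finset (Fin n)} {U : Finset (Fin m)}
    (hU : ∀ j ∈ U, (∃ i ∈ C, 0 < B i j) ∧ ∃ i ∈ C, B i j < 0)
    (hT : ∀ j ∉ U, ∀ i ∈ C, B i j = 0) {u : Fin n → ℤ} (hu : u ∈ L)
    (huC : ∀ i ∈ C, u i = 0) :
    u ∈ Submodule.span ℤ ((fun j i => B i j) '' {j | j ∉ U}) := by
  classical
  have hHL : Submodule.span ℤ ((fun j i => B i j) '' {j | j ∉ U}) ≤ L := by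
    rw [Submodule.span_le]
    rintro _ ⟨j, -, rfl⟩
    exact hBL j
  have h := faceHom_mul_eq_zero hr hU hT hu
  generalize Submodule.span ℤ ((fun j i => B i j) '' {j | j ∉ U}) = H at h hHL ⊢
  rw [faceHom_latticeBinomial_of_zero huC, mul_sub, sub_eq_zero] at h
  have h1 := congrArg (fun z => z.coeff (degQ H (posExp u))) h
  simp only [AddMonoidAlgebra.coeff_mul_single_apply, mul_one, ← sub_eq_add_neg,
    degQ_posExp_sub_degQ_negExp, sub_self] at h1
  rw [coeff_faceHom hpos hHL r hu, ← Submodule.Quotient.mk_zero,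
    coeff_faceHom hpos hHL r L.zero_mem, if_pos H.zero_mem, hr1] at h1
  by_contra hn
  simp [hn] at h1

/-- A lattice vector that is nonnegative on `C` vanishes there: otherwise `x^{u₊}` is sent to `0` and
`x^{u₋}` to an invertible element, so that `φ(r) = 0`, although `φ(r)` has coefficient `1` at `0`. -/
lemma vanish_of_nonneg (hpos : IsPositiveLattice L) (hBL : ∀ j, (fun i => B i j) ∈ L)
    (hr1 : constantCoeff r = 1)
    (hr : ∀ p ∈ latticeIdeal k L, r * p ∈
      Ideal.span (Set.range fun j : Fin m => latticeBinomial k fun i => B i j))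
    {C : Finset (Fin n)} {U : Finset (Fin m)}
    (hU : ∀ j ∈ U, (∃ i ∈ C, 0 < B i j) ∧ ∃ i ∈ C, B i j < 0)
    (hT : ∀ j ∉ U, ∀ i ∈ C, B i j = 0) {u : Fin n → ℤ} (hu : u ∈ L)
    (huC : ∀ i ∈ C, 0 ≤ u i) : ∀ i ∈ C, u i = 0 := by
  classical
  have hHL : Submodule.span ℤ ((fun j i => B i j) '' {j | j ∉ U}) ≤ L := by
    rw [Submodule.span_le]
    rintro _ ⟨j, -, rfl⟩
    exact hBL j
  have h := faceHom_mul_eq_zero hr hU hT hu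
  generalize Submodule.span ℤ ((fun j i => B i j) '' {j | j ∉ U}) = H at h hHL ⊢
  by_contra! hne
  obtain ⟨i, hi, hui⟩ := hne
  have hui' : 0 < u i := lt_of_le_of_ne (huC i hi) hui.symm
  rw [latticeBinomial, map_sub, faceHom_monomial_of_ne_zero _ hi (by simpa [posExp] using hui'),
    faceHom_monomial_of_zero _ (fun i hi => by simpa [negExp] using huC i hi), zero_sub,
    mul_neg, neg_eq_zero] at h
  have h1 := congrArg (fun z => z.coeff (degQ H (negExp u))) h
  simp only [AddMonoidAlgebra.coeff_mul_single_apply, mul_one, ← sub_eq_add_neg, sub_self] at h1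
  rw [← Submodule.Quotient.mk_zero, coeff_faceHom hpos hHL r L.zero_mem, if_pos H.zero_mem,
    hr1] at h1
  simp at h1

/-- If all columns of `B` are mixed, a mixed block with at least as many columns as rows can be enlarged
to one, still with at least as many columns as rows, such that the remaining columns vanish on its
rows: a column that is nonzero on `C` becomes mixed after adding at most one row. -/
lemma exists_saturated {C₀ : Finset (Fin n)} {U₀ : Finset (Fin m)} (hC₀ : C₀.Nonempty)
    (hcard₀ : C₀.card ≤ U₀.card)
    (hcol : ∀ j, (∃ i, 0 < B i j) ∧ ∃ i, B i j < 0)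
    (hU₀ : ∀ j ∈ U₀, (∃ i ∈ C₀, 0 < B i j) ∧ ∃ i ∈ C₀, B i j < 0) :
    ∃ (C : Finset (Fin n)) (U : Finset (Fin m)), C.Nonempty ∧ C.card ≤ U.card ∧
      (∀ j ∈ U, (∃ i ∈ C, 0 < B i j) ∧ ∃ i ∈ C, B i j < 0) ∧
      ∀ j ∉ U, ∀ i ∈ C, B i j = 0 := by
  classical
  induction hN : (Finset.univ \ U₀).card using Nat.strong_induction_on generalizing C₀ U₀ with
  | _ N ih =>
    by_cases hdone : ∀ j ∉ U₀, ∀ i ∈ C₀, B i j = 0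
    · exact ⟨C₀, U₀, hC₀, hcard₀, hU₀, hdone⟩
    push Not at hdone
    obtain ⟨j, hj, i, hi, hij⟩ := hdone
    obtain ⟨i', hi'⟩ : ∃ i', (∃ x ∈ insert i' C₀, 0 < B x j) ∧ ∃ x ∈ insert i' C₀, B x j < 0 := by
      rcases lt_or_gt_of_ne hij with h | h
      · obtain ⟨i', hi'⟩ := (hcol j).1
        exact ⟨i', ⟨i', by simp, hi'⟩, ⟨i, by simp [hi], h⟩⟩
      · obtain ⟨i', hi'⟩ := (hcol j).2
        exact ⟨i', ⟨i, by simp [hi], h⟩, ⟨i', by simp, hi'⟩⟩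
    refine ih (Finset.univ \ insert j U₀).card ?_ (C₀ := insert i' C₀) (U₀ := insert j U₀)
      (by simp) ?_ ?_ rfl
    · rw [← hN]
      apply Finset.card_lt_card
      refine ⟨fun x hx => ?_, fun hsub => ?_⟩
      · simp at hx ⊢; exact hx.2
      · have := hsub (x := j) (by simpa using hj)
        simp at this
    · rw [Finset.card_insert_of_notMem hj]
      exact (Finset.card_insert_le _ _).trans (by omega)
    · intro j' hj'
      rcases Finset.mem_insert.1 hj' with rfl | hj'
      · exact hi'
      · obtain ⟨⟨p, hp, hpp⟩, ⟨q, hq, hqn⟩⟩ := hU₀ j' hj'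
        exact ⟨⟨p, by simp [hp], hpp⟩, ⟨q, by simp [hq], hqn⟩⟩

/-- If the binomials of linearly independent columns generate `I_L` up to a factor `r` with constant
term `1`, the matrix is dominating. A square mixed submatrix extends to a saturated block with rows
`C` and columns `U`, where `|C| ≤ |U|`. Hence the `|U| + 1` vectors in `ℤ^C` given by the columns in
`U` and the all-ones vector are linearly dependent, so some combination of columns in `U` is
constant on `C`. It vanishes on `C` by `vanish_of_nonneg`, hence lies in the span of the columns
outside `U` by `mem_span_of_vanish`, against linear independence. -/
lemma dominating_of_local_generators (hpos : IsPositiveLattice L)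
    (hBL : ∀ j, (fun i => B i j) ∈ L)
    (hli : LinearIndependent ℤ fun (j : Fin m) (i : Fin n) => B i j)
    (hr1 : constantCoeff r = 1)
    (hr : ∀ p ∈ latticeIdeal k L, r * p ∈
      Ideal.span (Set.range fun j : Fin m => latticeBinomial k fun i => B i j)) :
    Dominating B := by
  classical
  intro s hs rr cc hrr hcc hmix
  have hcol : ∀ j, (∃ i, 0 < B i j) ∧ ∃ i, B i j < 0 := fun j =>
    hpos.exists_pos_and_neg (hBL j) (hli.ne_zero j)
  obtain ⟨C, U, hC, hcard, hU, hT⟩ := exists_saturated (B := B)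
    (C₀ := Finset.univ.image rr) (U₀ := Finset.univ.image cc)
    ⟨rr ⟨0, Nat.pos_of_ne_zero hs⟩, by simp⟩
    (by rw [Finset.card_image_of_injective _ hrr, Finset.card_image_of_injective _ hcc])
    hcol (by
      intro j hj
      obtain ⟨t, -, rfl⟩ := Finset.mem_image.1 hj
      obtain ⟨⟨p, hp⟩, ⟨q, hq⟩⟩ := hmix t
      exact ⟨⟨rr p, by simp, hp⟩, ⟨rr q, by simp, hq⟩⟩)
  have hdep : ¬ LinearIndependent ℤ
      (fun (o : Option U) (i : C) => o.elim (1 : ℤ) fun j => B i j) := fun h => by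
    have := h.fintype_card_le_finrank
    simp at this
    omega
  rw [Fintype.not_linearIndependent_iff] at hdep
  obtain ⟨g, hg, o, ho⟩ := hdep
  let u : Fin n → ℤ := ∑ j : U, g (some j) • fun i => B i j
  have huL : u ∈ L := Submodule.sum_mem _ fun j _ => L.smul_mem _ (hBL j)
  have huC : ∀ i ∈ C, u i = - g none := fun i hi => by
    have := congrFun hg ⟨i, hi⟩
    simp [Fintype.sum_option] at this
    simp [u, Finset.sum_apply]
    linarith
  have hN : g none = 0 := by
    obtain ⟨i, hi⟩ := hC
    rcases le_total (g none) 0 with h | h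
    · have := vanish_of_nonneg hpos hBL hr1 hr hU hT huL
        (fun i hi => by rw [huC i hi]; linarith) i hi
      rw [huC i hi] at this
      linarith
    · have := vanish_of_nonneg hpos hBL hr1 hr hU hT (L.neg_mem huL)
        (fun i hi => by rw [Pi.neg_apply, huC i hi]; linarith) i hi
      rw [Pi.neg_apply, huC i hi] at this
      linarith
  have hspan := mem_span_of_vanish hpos hBL hr1 hr hU hT huL
    fun i hi => by rw [huC i hi, hN, neg_zero]
  have hspanU : u ∈ Submodule.span ℤ ((fun j i => B i j) '' (U : Set (Fin m))) :=
    Submodule.sum_mem _ fun j _ => Submodule.smul_mem _ _ (Submodule.subset_span ⟨j, j.2, rfl⟩)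
  have hdisj : Disjoint (U : Set (Fin m)) {j | j ∉ U} :=
    Set.disjoint_left.2 fun j hj hj' => hj' hj
  have hu0 : u = 0 := Submodule.disjoint_def.1 (hli.disjoint_span_image hdisj) u hspanU hspan
  have hliU : LinearIndependent ℤ fun (j : U) (i : Fin n) => B i j :=
    hli.comp _ Subtype.val_injective
  have hg0 := Fintype.linearIndependent_iff.1 hliU (fun j => g (some j)) hu0
  rcases o with _ | j
  · exact ho hN
  · exact ho (hg0 j)

end LocalGenerators

lemma exists_dominating_of_isCI (k : Type*) [Field k] {n m : ℕ} (L : Submodule ℤ (Fin n → ℤ))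
    (hpos : IsPositiveLattice L) (hrank : latticeRank L = m) (hCI : IsCI (latticeIdeal k L) m) :
    ∃ B : Matrix (Fin n) (Fin m) ℤ, Dominating B ∧ colSpan B = L := by
  classical
  obtain ⟨f, hf⟩ := hCI
  let M : Ideal (MvPolynomial (Fin n) k) := RingHom.ker constantCoeff
  have hM : M.IsMaximal := RingHom.ker_isMaximal_of_surjective _ fun c => ⟨C c, by simp⟩
  obtain ⟨t, hts, htm, ht⟩ := exists_subset_card_le_span_le_sup M f _ hf
  obtain ⟨r, hrM, hr⟩ := Submodule.exists_sub_one_mem_and_smul_le_of_fg_of_le_sup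
    (I := M) (N := Ideal.span (t : Set (MvPolynomial (Fin n) k))) (N' := latticeIdeal k L)
    (P := latticeIdeal k L) (IsNoetherian.noetherian _) le_rfl ht
  have hr1 : constantCoeff r = 1 := by
    rw [RingHom.mem_ker, map_sub, map_one, sub_eq_zero] at hrM
    exact hrM
  have htsL : ∀ p ∈ t, ∃ u ∈ L, p = latticeBinomial k u := fun p hp => hts hp
  choose! w hwL hw using htsL
  -- When `t` has fewer than `m` elements, zero columns fill up the matrix.
  let e : t ↪ Fin m := (t.equivFin.toEmbedding).trans (Fin.castLEEmb htm)
  let B : Matrix (Fin n) (Fin m) ℤ := fun i j => if h : ∃ x, e x = j then w h.choose i else 0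
  have hBe : ∀ x : t, (fun i => B i (e x)) = w x := fun x => by
    have h : ∃ y, e y = e x := ⟨x, rfl⟩
    have : h.choose = x := e.injective h.choose_spec
    ext i
    simp only [B, dif_pos h, this]
  have hBL : ∀ j, (fun i => B i j) ∈ L := fun j => by
    by_cases h : ∃ x, e x = j
    · obtain ⟨x, rfl⟩ := h
      rw [hBe]
      exact hwL _ x.2
    · simp only [B, dif_neg h]
      exact L.zero_mem
  have hr' : ∀ p ∈ latticeIdeal k L, r * p ∈
      Ideal.span (Set.range fun j : Fin m => latticeBinomial k fun i => B i j) := by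
    intro p hp
    refine Ideal.span_mono ?_ (hr (Submodule.smul_mem_pointwise_smul p r _ hp))
    intro x hx
    refine ⟨e ⟨x, hx⟩, ?_⟩
    simp only [hBe]
    exact (hw _ hx).symm
  have hspan : Submodule.span ℤ (Set.range fun (j : Fin m) (i : Fin n) => B i j) = L := by
    apply le_antisymm
    · rw [Submodule.span_le]
      rintro _ ⟨j, rfl⟩
      exact hBL j
    · intro u hu
      have := mem_span_of_vanish (C := ∅) (U := ∅) hpos hBL hr1 hr' (by simp) (by simp) hu (by simp)
      simpa using this
  have hli : LinearIndependent ℤ fun (j : Fin m) (i : Fin n) => B i j := by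
    rw [linearIndependent_iff_card_eq_finrank_span, Set.finrank, hspan]
    simpa [latticeRank] using hrank.symm
  refine ⟨B, dominating_of_local_generators hpos hBL hli hr1 hr', ?_⟩
  rw [colSpan, Matrix.range_mulVecLin]
  exact hspan

/-- Theorem 2.9 of Fischer–Shapiro, as Theorem `thm:mixedDominating`:
for a positive lattice `L ⊆ ℤⁿ` of rank `m`, the lattice ideal `I_L` is a complete
intersection iff `L = ℤB` for some dominating matrix `B`; in this case `I_L` is
generated by the binomials of the columns of `B`. -/
theorem statement0 (k : Type*) [Field k] {n m : ℕ} (L : Submodule ℤ (Fin n → ℤ))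
    (hpos : IsPositiveLattice L) (hrank : latticeRank L = m) :
    (IsCI (latticeIdeal k L) m ↔
      ∃ B : Matrix (Fin n) (Fin m) ℤ, Dominating B ∧ colSpan B = L) ∧
    ∀ B : Matrix (Fin n) (Fin m) ℤ, Dominating B → colSpan B = L →
      latticeIdeal k L =
        Ideal.span (Set.range fun j : Fin m => latticeBinomial k fun i => B i j) := by
  refine ⟨⟨exists_dominating_of_isCI k L hpos hrank, ?_⟩, ?_⟩
  · rintro ⟨B, hB, rfl⟩
    exact ⟨_, (hB.latticeIdeal_eq k).symm⟩
  · rintro B hB rfl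
    exact hB.latticeIdeal_eq k
end

section
/- Let L ⊆ ℤ^n be a positive lattice of rank 2. The lattice ideal I_L is a complete intersection if and only if L has an imbalanced Gale diagram G_B; in this case I_L = ⟨x^{u_+} − x^{u_−} : u a column of B⟩. -/
/-!
Monomials `x^p` and `x^q` with `p - q ∈ L` differ by an element of the ideal of a family of
lattice vectors as soon as `p` and `q` are joined by moves along these vectors inside `ℕⁿ`.

Imbalanced implies complete intersection. Let `u`, `v` be the columns of `B`, with `v i ≥ 0`
wherever `u i ≠ 0`, and let `q = p + a u + b v` with `b ≥ 0`. The step from `p` to `p + v` stays in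
`ℕⁿ`, because `q i = p i + b v i` at each coordinate with `v i < 0`. Induction on `b` reaches the
case `b = 0`, where all intermediate points lie on a segment (`latticeIdeal_eq_of_imbalanced`).

Complete intersection implies imbalanced. Put `𝔪 = ⟨x₁, …, xₙ⟩`. The `k`-space `I_L / 𝔪 I_L` has
dimension at most two and is spanned by the binomials, so two of them, with exponents `u`, `v`,
generate `I_L` modulo `𝔪 I_L` (`exists_binomials`), hence modulo `𝔪 ^ N` for every `N`. In place of
graded Nakayama, `posExp_mem_iff` uses the functionals `g ↦ ∑_{p ∈ F} coeff p g` for finite sets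
`F` of exponents stable under moves along `u` and `v`; these vanish on `I_L`.

* Taking `F` to be a fiber of `ℤu + ℤv` (finite by positivity and Dickson's lemma) gives
  `ℤu + ℤv = L` (`span_pair_eq`).
* Taking `F` to be a single exponent shows that no two rows of `(u, v)` have opposite signs in both
  columns: both binomials would lie in `⟨x i, x j⟩`, while that of `v i • u - u i • v` does not
  (`not_opposite_rows`).

A matrix without such rows is imbalanced after swapping columns or changing a sign
(`imbalanced_cases`).
-/

open MvPolynomial

section Helpers

variable {n : ℕ}

@[simp] lemma posExp_apply (u : Fin n → ℤ) (i : Fin n) : posExp u i = (u i).toNat := rfl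

@[simp] lemma negExp_apply (u : Fin n → ℤ) (i : Fin n) : negExp u i = (-u i).toNat := rfl

lemma latticeBinomial_mem (k : Type*) [Field k] {L : Submodule ℤ (Fin n → ℤ)} {u : Fin n → ℤ}
    (hu : u ∈ L) : latticeBinomial k u ∈ latticeIdeal k L :=
  Ideal.subset_span ⟨u, hu, rfl⟩

lemma monomial_mul_latticeBinomial (k : Type*) [Field k] (q : Fin n →₀ ℕ) (c : k)
    (u : Fin n → ℤ) :
    monomial q c * latticeBinomial k u =
      monomial (q + posExp u) c - monomial (q + negExp u) c := by
  simp [latticeBinomial, mul_sub, monomial_mul]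

/-! ### Moves in a fiber and imbalanced bases -/

lemma monomial_sub_mem_of_move {k : Type*} [Field k] {J : Ideal (MvPolynomial (Fin n) k)}
    {u : Fin n → ℤ} (hu : latticeBinomial k u ∈ J) {p q : Fin n →₀ ℕ}
    (h : ∀ i, (q i : ℤ) = p i + u i) :
    monomial q (1 : k) - monomial p 1 ∈ J := by
  have key := J.mul_mem_left (monomial (p - negExp u) (1 : k)) hu
  rw [monomial_mul_latticeBinomial] at key
  have h1 : p - negExp u + posExp u = q := by
    ext i
    have := h i
    simp only [Finsupp.add_apply, Finsupp.tsub_apply, posExp_apply, negExp_apply]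
    omega
  have h2 : p - negExp u + negExp u = p := by
    ext i
    have := h i
    simp only [Finsupp.add_apply, Finsupp.tsub_apply, negExp_apply]
    omega
  rwa [h1, h2] at key

lemma monomial_sub_mem_of_nsmul {k : Type*} [Field k] {J : Ideal (MvPolynomial (Fin n) k)}
    {u : Fin n → ℤ} (hu : latticeBinomial k u ∈ J) (a : ℕ) :
    ∀ {p q : Fin n →₀ ℕ}, (∀ i, (q i : ℤ) = p i + a * u i) →
      monomial q (1 : k) - monomial p 1 ∈ J := by
  induction a with
  | zero =>
    intro p q h
    have : q = p := by ext i; have := h i; push_cast at this; omega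
    simp [this]
  | succ a ih =>
    intro p q h
    -- `p + u` lies on the segment from `p` to `q`, hence is nonnegative
    have hnn : ∀ i, 0 ≤ (p i : ℤ) + u i := by
      intro i
      have := h i
      push_cast at this
      by_contra! hc
      nlinarith [Int.natCast_nonneg (q i), Int.natCast_nonneg (p i), Int.natCast_nonneg a]
    let r : Fin n →₀ ℕ := Finsupp.equivFunOnFinite.symm fun i => ((p i : ℤ) + u i).toNat
    have hr : ∀ i, (r i : ℤ) = p i + u i := fun i => Int.toNat_of_nonneg (hnn i)
    have h1 : monomial r (1 : k) - monomial p 1 ∈ J := monomial_sub_mem_of_move hu hr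
    have h2 : monomial q (1 : k) - monomial r 1 ∈ J :=
      ih fun i => by rw [hr, h i]; push_cast; ring
    simpa using J.add_mem h2 h1

lemma monomial_sub_mem_of_zsmul {k : Type*} [Field k] {J : Ideal (MvPolynomial (Fin n) k)}
    {u : Fin n → ℤ} (hu : latticeBinomial k u ∈ J) (a : ℤ)
    {p q : Fin n →₀ ℕ} (h : ∀ i, (q i : ℤ) = p i + a * u i) :
    monomial q (1 : k) - monomial p 1 ∈ J := by
  obtain ⟨m, rfl | rfl⟩ := a.eq_nat_or_neg
  · exact monomial_sub_mem_of_nsmul hu m h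
  · rw [← neg_mem_iff, neg_sub]
    exact monomial_sub_mem_of_nsmul hu m fun i => by rw [h i]; ring

/-- If `v` is nonnegative wherever `u` is nonzero, then `p` and `p + a u + b v` (with `b ≥ 0`)
are connected by moves along `u` and `v`: a step from `p` along `v` never leaves `ℕⁿ`, since
at a coordinate with `v i < 0` the final value is `p i + b * v i`. -/
lemma monomial_sub_mem_of_imbalanced {k : Type*} [Field k]
    {J : Ideal (MvPolynomial (Fin n) k)} {u v : Fin n → ℤ}
    (hu : latticeBinomial k u ∈ J) (hv : latticeBinomial k v ∈ J)
    (huv : ∀ i, u i = 0 ∨ 0 ≤ v i) (a : ℤ) (b : ℕ) :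
    ∀ {p q : Fin n →₀ ℕ}, (∀ i, (q i : ℤ) = p i + a * u i + b * v i) →
      monomial q (1 : k) - monomial p 1 ∈ J := by
  induction b with
  | zero =>
    intro p q h
    exact monomial_sub_mem_of_zsmul hu a fun i => by simpa using h i
  | succ b ih =>
    intro p q h
    have hnn : ∀ i, 0 ≤ (p i : ℤ) + v i := by
      intro i
      have hi := h i
      push_cast at hi
      rcases huv i with h0 | h0
      · rw [h0] at hi
        by_contra! hc
        nlinarith [Int.natCast_nonneg (q i), Int.natCast_nonneg (p i), Int.natCast_nonneg b]
      · positivity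
    let r : Fin n →₀ ℕ := Finsupp.equivFunOnFinite.symm fun i => ((p i : ℤ) + v i).toNat
    have hr : ∀ i, (r i : ℤ) = p i + v i := fun i => Int.toNat_of_nonneg (hnn i)
    have h1 : monomial r (1 : k) - monomial p 1 ∈ J := monomial_sub_mem_of_move hv hr
    have h2 : monomial q (1 : k) - monomial r 1 ∈ J :=
      ih fun i => by rw [hr, h i]; push_cast; ring
    simpa using J.add_mem h2 h1

lemma latticeIdeal_eq_of_imbalanced (k : Type*) [Field k] {L : Submodule ℤ (Fin n → ℤ)}
    {B : Matrix (Fin n) (Fin 2) ℤ} (hB : IsLatticeBasis L B) (hI : Imbalanced B) :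
    latticeIdeal k L =
      Ideal.span (Set.range fun j : Fin 2 => latticeBinomial k fun i => B i j) := by
  obtain ⟨-, rfl⟩ := hB
  apply le_antisymm
  · rw [latticeIdeal, Ideal.span_le]
    rintro _ ⟨w, ⟨c, rfl⟩, rfl⟩
    set J := Ideal.span (Set.range fun j : Fin 2 => latticeBinomial k fun i => B i j) with hJ
    have hu : latticeBinomial k (fun i => B i 0) ∈ J := Ideal.subset_span ⟨0, rfl⟩
    have hv : latticeBinomial k (fun i => B i 1) ∈ J := Ideal.subset_span ⟨1, rfl⟩
    set w := B.mulVecLin c with hw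
    have hwi : ∀ i, w i = c 0 * B i 0 + c 1 * B i 1 := by
      intro i
      simp [hw, Matrix.mulVec, dotProduct, Fin.sum_univ_two, mul_comm]
    change monomial (posExp w) (1 : k) - monomial (negExp w) 1 ∈ J
    obtain ⟨b, hb | hb⟩ := (c 1).eq_nat_or_neg
    · refine monomial_sub_mem_of_imbalanced hu hv hI (c 0) b fun i => ?_
      have := hwi i
      rw [hb] at this
      simp only [posExp_apply, negExp_apply]
      omega
    · rw [← neg_mem_iff, neg_sub]
      refine monomial_sub_mem_of_imbalanced hu hv hI (-c 0) b fun i => ?_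
      have := hwi i
      rw [hb] at this
      simp only [posExp_apply, negExp_apply, neg_mul] at this ⊢
      omega
  · rw [Ideal.span_le]
    rintro _ ⟨j, rfl⟩
    refine latticeBinomial_mem k ⟨Pi.single j 1, ?_⟩
    ext i
    simp

/-! ### Binomial generators modulo `𝔪 I_L` -/

/-- A nonempty subset of the span of two vectors contains two of its elements spanning it. -/
lemma exists_pair_span {K V : Type*} [Field K] [AddCommGroup V] [Module K V] (f : Fin 2 → V)
    (t : Set V) (ht : t.Nonempty) (h : t ⊆ Submodule.span K (Set.range f)) :
    ∃ x ∈ t, ∃ y ∈ t, t ⊆ Submodule.span K {x, y} := by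
  classical
  obtain ⟨b, hbt, hsp, hli⟩ := exists_linearIndependent K t
  have hle : Set.range ((↑) : b → V) ≤ Submodule.span K (Set.range f) := by
    simpa using hbt.trans h
  have hfin : Finite b := hli.finite_of_le_span_finite _ _ hle
  have := Fintype.ofFinite b
  have hb2 : b.ncard ≤ 2 := by
    rw [Set.ncard_eq_toFinset_card', Set.toFinset_card]
    exact (linearIndependent_le_span_aux' _ hli (Set.range f) hle).trans
      (by simpa using Fintype.card_range_le f)
  have htb : t ⊆ Submodule.span K b := hsp ▸ Submodule.subset_span
  obtain ⟨z, hz⟩ := ht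
  have : ∃ x ∈ t, ∃ y ∈ t, b ⊆ {x, y} := by
    have hcases : b.ncard = 0 ∨ b.ncard = 1 ∨ b.ncard = 2 := by omega
    rcases hcases with h0 | h1 | h2
    · rw [Set.ncard_eq_zero b.toFinite] at h0
      exact ⟨z, hz, z, hz, by simp [h0]⟩
    · obtain ⟨x, rfl⟩ := Set.ncard_eq_one.1 h1
      exact ⟨x, hbt rfl, x, hbt rfl, by simp⟩
    · obtain ⟨x, y, -, rfl⟩ := Set.ncard_eq_two.1 h2
      exact ⟨x, hbt (by simp), y, hbt (by simp), le_rfl⟩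
  obtain ⟨x, hx, y, hy, hxy⟩ := this
  exact ⟨x, hx, y, hy, htb.trans (Submodule.span_mono hxy)⟩

/-- Modulo `𝔪 I`, the ideal `I = ⟨s⟩` is the `k`-linear span of `s`. -/
lemma mkQ_mem_span {k : Type*} [Field k] (s : Set (MvPolynomial (Fin n) k))
    (I : Ideal (MvPolynomial (Fin n) k)) (hs : Ideal.span s = I)
    {r : MvPolynomial (Fin n) k} (hr : r ∈ I) :
    ((idealOfVars (Fin n) k * I).restrictScalars k).mkQ r ∈
      Submodule.span k (((idealOfVars (Fin n) k * I).restrictScalars k).mkQ '' s) := by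
  subst hs
  induction hr using Submodule.span_induction with
  | mem x hx => exact Submodule.subset_span ⟨x, hx, rfl⟩
  | zero => rw [map_zero]; exact Submodule.zero_mem _
  | add x y _ _ hx hy => rw [map_add]; exact Submodule.add_mem _ hx hy
  | smul a x hx ih =>
    have h : a • x - coeff 0 a • x ∈ idealOfVars (Fin n) k * Ideal.span s := by
      rw [smul_eq_mul, smul_eq_C_mul, ← sub_mul]
      refine Ideal.mul_mem_mul ?_ hx
      rw [← pow_one (idealOfVars (Fin n) k), mem_pow_idealOfVars_iff']
      intro d hd
      have : d = 0 := (Finsupp.degree_eq_zero_iff d).1 (by omega)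
      simp [this]
    have h2 := (Submodule.Quotient.eq
      ((idealOfVars (Fin n) k * Ideal.span s).restrictScalars k)).2 h
    rw [Submodule.mkQ_apply, h2, ← Submodule.mkQ_apply, map_smul]
    exact Submodule.smul_mem _ _ ih

/-- If `I_L` is generated by two polynomials, then it is generated modulo `𝔪 I_L` by two of its
defining binomials. -/
lemma exists_binomials {k : Type*} [Field k] {L : Submodule ℤ (Fin n → ℤ)}
    (h : IsCI (latticeIdeal k L) 2) :
    ∃ u ∈ L, ∃ v ∈ L, latticeIdeal k L ≤
      Ideal.span {latticeBinomial k u, latticeBinomial k v} ⊔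
        idealOfVars (Fin n) k * latticeIdeal k L := by
  obtain ⟨f, hf⟩ := h
  set I := latticeIdeal k L with hI
  set W := (idealOfVars (Fin n) k * I).restrictScalars k with hW
  set S : Set (MvPolynomial (Fin n) k) := {p | ∃ u ∈ L, p = latticeBinomial k u} with hS
  obtain ⟨x, ⟨_, ⟨u, hu, rfl⟩, rfl⟩, y, ⟨_, ⟨v, hv, rfl⟩, rfl⟩, hxy⟩ :=
    exists_pair_span (K := k) (W.mkQ ∘ f) (W.mkQ '' S) ⟨_, _, ⟨0, L.zero_mem, rfl⟩, rfl⟩ (by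
      rintro _ ⟨p, hp, rfl⟩
      rw [Set.range_comp]
      exact mkQ_mem_span _ I hf (Ideal.subset_span hp))
  refine ⟨u, hu, v, hv, fun r hr => ?_⟩
  have h1 : W.mkQ r ∈ Submodule.span k {W.mkQ (latticeBinomial k u),
      W.mkQ (latticeBinomial k v)} :=
    Submodule.span_le.2 hxy (mkQ_mem_span S I rfl hr)
  obtain ⟨c, d, hcd⟩ := Submodule.mem_span_pair.1 h1
  rw [← map_smul, ← map_smul, ← map_add, Submodule.mkQ_apply, Submodule.mkQ_apply, eq_comm,
    Submodule.Quotient.eq] at hcd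
  have h2 : c • latticeBinomial k u + d • latticeBinomial k v ∈
      Ideal.span {latticeBinomial k u, latticeBinomial k v} := by
    rw [smul_eq_C_mul, smul_eq_C_mul]
    exact Ideal.mem_span_pair.2 ⟨_, _, rfl⟩
  exact Submodule.mem_sup.2 ⟨_, h2, _, hcd, by ring⟩

/-! ### Functionals vanishing on the lattice ideal -/

lemma le_sup_pow {R : Type*} [CommRing R] {I J m : Ideal R} (h : I ≤ J ⊔ m * I) (N : ℕ) :
    I ≤ J ⊔ m ^ N := by
  suffices I ≤ J ⊔ m ^ N * I from this.trans (sup_le_sup_left Ideal.mul_le_left _)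
  induction N with
  | zero => simp
  | succ N ih =>
    refine ih.trans (sup_le le_sup_left ?_)
    calc m ^ N * I ≤ m ^ N * (J ⊔ m * I) := Ideal.mul_mono_right h
      _ = m ^ N * J ⊔ m ^ (N + 1) * I := by rw [Ideal.mul_sup, pow_succ, mul_assoc]
      _ ≤ J ⊔ m ^ (N + 1) * I := sup_le_sup_right Ideal.mul_le_right _

/-- The linear functional `g ↦ ∑_{p ∈ F} coeff p g` kills every multiple of the binomial of `u`
when `F` is stable under moves along `u`. -/
lemma sum_coeff_mul_eq_zero {k : Type*} [Field k] {u : Fin n → ℤ} (F : Finset (Fin n →₀ ℕ))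
    (hF : ∀ q, q + posExp u ∈ F ↔ q + negExp u ∈ F) (r : MvPolynomial (Fin n) k) :
    ∑ p ∈ F, coeff p (r * latticeBinomial k u) = 0 := by
  classical
  induction r using MvPolynomial.induction_on' with
  | monomial q c =>
    simp [monomial_mul_latticeBinomial, coeff_monomial, hF]
  | add a b ha hb => simp [add_mul, Finset.sum_add_distrib, ha, hb]

/-- A finite set `F` of exponents has bounded degree, so the functional
`g ↦ ∑_{p ∈ F} coeff p g` kills `𝔪 ^ N` for large `N`. If `F` is stable under moves along `u` and
`v`, and the binomials of `u` and `v` generate `I_L` modulo `𝔪 I_L`, the functional therefore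
kills `I_L`, and `F` is stable under `posExp w ↔ negExp w` for all `w ∈ L`. -/
lemma posExp_mem_iff {k : Type*} [Field k] {L : Submodule ℤ (Fin n → ℤ)} {u v : Fin n → ℤ}
    (h : latticeIdeal k L ≤
      Ideal.span {latticeBinomial k u, latticeBinomial k v} ⊔
        idealOfVars (Fin n) k * latticeIdeal k L)
    (F : Finset (Fin n →₀ ℕ))
    (hu : ∀ q, q + posExp u ∈ F ↔ q + negExp u ∈ F)
    (hv : ∀ q, q + posExp v ∈ F ↔ q + negExp v ∈ F)
    {w : Fin n → ℤ} (hw : w ∈ L) : posExp w ∈ F ↔ negExp w ∈ F := by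
  classical
  have hmem := le_sup_pow h (F.sup Finsupp.degree + 1) (latticeBinomial_mem k hw)
  obtain ⟨g, hg, e, he, hge⟩ := Submodule.mem_sup.1 hmem
  obtain ⟨a, b, rfl⟩ := Ideal.mem_span_pair.1 hg
  have he0 : ∑ p ∈ F, coeff p e = 0 :=
    Finset.sum_eq_zero fun p hp => (mem_pow_idealOfVars_iff' _ _).1 he p
      (Nat.lt_succ_of_le (Finset.le_sup (f := Finsupp.degree) hp))
  have hsum : ∑ p ∈ F, coeff p (latticeBinomial k w) = 0 := by
    simp [← hge, Finset.sum_add_distrib, he0, sum_coeff_mul_eq_zero F hu,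
      sum_coeff_mul_eq_zero F hv]
  simp only [latticeBinomial, coeff_sub, coeff_monomial, Finset.sum_sub_distrib,
    Finset.sum_ite_eq] at hsum
  split_ifs at hsum <;> simp_all

/-! ### Two binomial generators span the lattice -/

/-- In a positive lattice every fiber is an antichain, hence finite by Dickson's lemma. -/
lemma fiber_finite {L : Submodule ℤ (Fin n → ℤ)} (hpos : IsPositiveLattice L) (c : Fin n → ℤ) :
    {p : Fin n →₀ ℕ | (fun i => (p i : ℤ)) - c ∈ L}.Finite := by
  apply WellQuasiOrderedLE.finite_of_isAntichain
  intro p hp q hq hne hle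
  apply hne
  have h := hpos _ (L.sub_mem hq hp) fun i => by
    have := hle i
    simp; omega
  ext i
  have := congrFun h i
  simp at this
  omega

lemma span_pair_eq {k : Type*} [Field k] {L : Submodule ℤ (Fin n → ℤ)}
    (hpos : IsPositiveLattice L) {u v : Fin n → ℤ} (huL : u ∈ L) (hvL : v ∈ L)
    (h : latticeIdeal k L ≤
      Ideal.span {latticeBinomial k u, latticeBinomial k v} ⊔
        idealOfVars (Fin n) k * latticeIdeal k L) :
    Submodule.span ℤ {u, v} = L := by
  set M := Submodule.span ℤ {u, v} with hM
  have hle : M ≤ L := Submodule.span_le.2 (by rintro x (rfl | rfl) <;> assumption)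
  refine le_antisymm hle fun w hw => ?_
  have hposM : IsPositiveLattice M := fun x hx => hpos x (hle hx)
  have hfin := fiber_finite hposM fun i => (posExp w i : ℤ)
  -- the fiber of `posExp w` modulo `M` is stable under moves along elements of `M`
  have hmove : ∀ x ∈ M, ∀ q : Fin n →₀ ℕ,
      q + posExp x ∈ hfin.toFinset ↔ q + negExp x ∈ hfin.toFinset := by
    intro x hx q
    simp only [Set.Finite.mem_toFinset, Set.mem_ofPred_eq]
    rw [← Submodule.add_mem_iff_left M hx (x := (fun i => ((q + negExp x) i : ℤ)) - _)]
    convert Iff.rfl using 2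
    ext i
    simp
    omega
  have := (posExp_mem_iff h hfin.toFinset (hmove u (Submodule.subset_span (by simp)))
    (hmove v (Submodule.subset_span (by simp))) hw).1 (by
      simp only [Set.Finite.mem_toFinset, Set.mem_ofPred_eq]
      convert M.zero_mem using 1
      ext i; simp)
  simp only [Set.Finite.mem_toFinset, Set.mem_ofPred_eq] at this
  rw [← neg_mem_iff]
  convert this using 1
  ext i
  simp only [Pi.neg_apply, Pi.sub_apply, posExp_apply, negExp_apply]
  omega

/-- The matrix with columns `u` and `v`. -/
def pairMatrix (u v : Fin n → ℤ) : Matrix (Fin n) (Fin 2) ℤ := Matrix.of fun i j => ![u, v] j i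

lemma isLatticeBasis_pairMatrix {L : Submodule ℤ (Fin n → ℤ)} (hrank : latticeRank L = 2)
    {u v : Fin n → ℤ} (h : Submodule.span ℤ {u, v} = L) :
    IsLatticeBasis L (pairMatrix u v) := by
  have hcol : (fun j : Fin 2 => fun i => pairMatrix u v i j) = ![u, v] := rfl
  have hrange : Set.range ![u, v] = {u, v} := by simp [Matrix.range_cons, Set.pair_comm]
  constructor
  · rw [hcol, linearIndependent_iff_card_eq_finrank_span, Set.finrank, hrange, h]
    simpa [latticeRank] using hrank.symm
  · rw [colSpan, Matrix.range_mulVecLin]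
    change Submodule.span ℤ (Set.range ![u, v]) = L
    rw [hrange, h]

/-! ### Sign patterns of the rows -/

/-- If the binomials of `u` and `v` generate `I_L` up to `𝔪 I_L`, no two rows of the matrix
`(u, v)` have opposite nonzero signs in both columns. Otherwise both binomials lie in the prime
`⟨x i, x j⟩`, whereas the binomial of `w = v i • u - u i • v` does not: since `w i = 0`, one of
its two monomials involves neither `x i` nor `x j`. -/
lemma not_opposite_rows {k : Type*} [Field k] {L : Submodule ℤ (Fin n → ℤ)}
    {u v : Fin n → ℤ} (hB : IsLatticeBasis L (pairMatrix u v)) (huL : u ∈ L) (hvL : v ∈ L)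
    (h : latticeIdeal k L ≤
      Ideal.span {latticeBinomial k u, latticeBinomial k v} ⊔
        idealOfVars (Fin n) k * latticeIdeal k L)
    (i j : Fin n) : ¬ (u i * u j < 0 ∧ v i * v j < 0) := by
  rintro ⟨hui, hvi⟩
  set w := v i • u - u i • v with hw
  have hwL : w ∈ L := L.sub_mem (L.smul_mem _ huL) (L.smul_mem _ hvL)
  have hwi : w i = 0 := by simp [hw, mul_comm]
  have hw0 : w ≠ 0 := by
    intro h0
    have hli : LinearIndependent ℤ ![u, v] := hB.1
    have := LinearIndependent.pair_iff.1 hli (v i) (-u i) (by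
      rw [neg_smul, ← sub_eq_add_neg]; exact h0)
    rw [this.1] at hvi
    simp at hvi
  have hstable : ∀ p : Fin n →₀ ℕ, p i = 0 → p j = 0 → ∀ x : Fin n → ℤ, x i * x j < 0 →
      ∀ q, q + posExp x ∈ ({p} : Finset (Fin n →₀ ℕ)) ↔
        q + negExp x ∈ ({p} : Finset (Fin n →₀ ℕ)) := by
    intro p hpi hpj x hx q
    have hs := mul_neg_iff.1 hx
    simp only [Finset.mem_singleton]
    constructor <;> intro hp <;> exfalso <;>
    · have h1 := DFunLike.congr_fun hp i
      have h2 := DFunLike.congr_fun hp j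
      simp only [Finsupp.add_apply, posExp_apply, negExp_apply] at h1 h2
      omega
  have hne : posExp w ≠ negExp w := by
    intro he
    apply hw0
    ext l
    have := DFunLike.congr_fun he l
    simp only [posExp_apply, negExp_apply] at this
    simp only [Pi.zero_apply]
    omega
  rcases le_total (w j) 0 with hj | hj
  · have h1 : posExp w i = 0 := by simp [hwi]
    have h2 : posExp w j = 0 := by simpa using hj
    have := posExp_mem_iff h {posExp w} (hstable _ h1 h2 u hui) (hstable _ h1 h2 v hvi) hwL
    simp [hne.symm] at this
  · have h1 : negExp w i = 0 := by simp [hwi]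
    have h2 : negExp w j = 0 := by simpa using hj
    have := posExp_mem_iff h {negExp w} (hstable _ h1 h2 u hui) (hstable _ h1 h2 v hvi) hwL
    simp [hne] at this

/-- Up to swapping the columns and changing the sign of the second one, a matrix without two rows
of opposite signs is imbalanced. -/
lemma imbalanced_cases {u v : Fin n → ℤ}
    (h : ∀ i j, ¬ (u i * u j < 0 ∧ v i * v j < 0)) :
    Imbalanced (pairMatrix u v) ∨ Imbalanced (pairMatrix u (-v)) ∨
      Imbalanced (pairMatrix v u) ∨ Imbalanced (pairMatrix v (-u)) := by
  by_contra! hc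
  obtain ⟨h1, h2, h3, h4⟩ := hc
  simp only [Imbalanced, pairMatrix, Matrix.of_apply, Matrix.cons_val_zero, Matrix.cons_val_one,
    Pi.neg_apply, not_forall, not_or, not_le, neg_lt_zero] at h1 h2 h3 h4
  obtain ⟨a, ha, ha'⟩ := h1
  obtain ⟨b, hb, hb'⟩ := h2
  obtain ⟨c, hc, hc'⟩ := h3
  obtain ⟨d, hd, hd'⟩ := h4
  simp only [mul_neg_iff] at h
  have hab := h a b
  have hac := h a c
  have had := h a d
  have hbc := h b c
  have hbd := h b d
  have hcd := h c d
  omega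

end Helpers

/-- Theorem `thm:codim2CM`(1): for a positive lattice `L ⊆ ℤⁿ` of
rank 2, the lattice ideal `I_L` is a complete intersection iff `L` has an imbalanced
Gale diagram `G_B`; in this case `I_L` is generated by the binomials of the columns
of `B`. -/
theorem statement1 (k : Type*) [Field k] {n : ℕ} (L : Submodule ℤ (Fin n → ℤ))
    (hpos : IsPositiveLattice L) (hrank : latticeRank L = 2) :
    (IsCI (latticeIdeal k L) 2 ↔
      ∃ B : Matrix (Fin n) (Fin 2) ℤ, IsLatticeBasis L B ∧ Imbalanced B) ∧
    ∀ B : Matrix (Fin n) (Fin 2) ℤ, IsLatticeBasis L B → Imbalanced B →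
      latticeIdeal k L =
        Ideal.span (Set.range fun j : Fin 2 => latticeBinomial k fun i => B i j) := by
  refine ⟨⟨fun hCI => ?_, ?_⟩, fun B hB hI => latticeIdeal_eq_of_imbalanced k hB hI⟩
  · obtain ⟨u, hu, v, hv, h⟩ := exists_binomials hCI
    have hspan := span_pair_eq hpos hu hv h
    have hB := isLatticeBasis_pairMatrix hrank hspan
    have hneg : ∀ x y : Fin n → ℤ, Submodule.span ℤ {x, y} = L →
        Submodule.span ℤ {x, -y} = L := by
      intro x y hxy
      rw [← hxy, Submodule.span_insert, Submodule.span_insert, ← Set.neg_singleton,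
        Submodule.span_neg]
    have hswap : Submodule.span ℤ {v, u} = L := by rw [Set.pair_comm]; exact hspan
    rcases imbalanced_cases (not_opposite_rows hB hu hv h) with hI | hI | hI | hI
    · exact ⟨_, hB, hI⟩
    · exact ⟨_, isLatticeBasis_pairMatrix hrank (hneg _ _ hspan), hI⟩
    · exact ⟨_, isLatticeBasis_pairMatrix hrank hswap, hI⟩
    · exact ⟨_, isLatticeBasis_pairMatrix hrank (hneg _ _ hswap), hI⟩
  · rintro ⟨B, hB, hI⟩
    exact ⟨_, (latticeIdeal_eq_of_imbalanced k hB hI).symm⟩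
end

section
/- Let L ⊆ ℤ^n be a positive lattice of rank 2. The quotient k[x_1,…,x_n]/I_L is NOT Cohen–Macaulay if and only if L has a Gale diagram G_B which intersects each of the four open quadrants of ℝ², i.e., there is a ℤ-basis B of L whose set of rows meets all four open quadrants. -/
/-!
Here `k[x]/I_L` being Cohen–Macaulay means having a free resolution of length two.

*A basis meeting the four quadrants excludes such a resolution.* Let the rows `p, q, r, s` of the
basis `(u, v)` lie in the four quadrants. Let `a` be the least vector that is nonnegative together
with `a + u`, `a + v` and `a + u + v`, and let `D` be the class of `a - e_p - e_q - e_r - e_s` in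
`ℤⁿ/L`. There is no monomial of degree `D`, but there is one of degree `D + e_i` for each of
`i = p, q, r, s` (`cornerVec_nonneg`, `cornerVec_not_nonneg`). The four monomials form a Koszul
1-cocycle of `k[x]/I_L` with respect to the variables `x_p, x_q, x_r, x_s`, which is not a
coboundary. On the other hand, these variables form a regular sequence in `k[x]`, and dimension
shifting along a resolution of length two shows that the first Koszul cohomology of the quotient
vanishes (`exists_of_cocycle`). This contradiction is `not_resolution_of_quadrants`.

*If no basis meets the four quadrants, there is such a resolution.* Then the rows of every basis
`(u, v)` miss the first or third quadrant, or the second or fourth one. If some basis misses a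
quadrant of both kinds, `I_L` is generated by the two binomials of the basis, which are coprime,
and the Koszul complex resolves the quotient. Otherwise Euclid's algorithm, applied to a basis
meeting the first and third quadrants, terminates (`exists_triple`) in vectors `a, b, c` with sum
zero such that each of the pairs `(a, b)`, `(a, c)`, `(b, c)` misses the first or third quadrant.
The binomials of `a, b, c` then generate `I_L` (`latticeIdeal_eq_span_triple`) and are the maximal
minors of a `3 × 2` matrix of monomials (`hasFreeResolution_triple`), so that the Hilbert–Burch
complex is a resolution.

Membership in `I_L` is handled throughout via the map from `k[x]` to the group algebra of `ℤⁿ/L`,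
whose kernel is `I_L`.
-/

open MvPolynomial

/-! ### The lattice ideal as the kernel of a map to a group algebra -/

section GroupAlgebra

variable {V : Type*} [Fintype V]

/-- Reading off the exponents of two monomials, their difference is a monomial multiple of
the binomial of the difference vector. -/
lemma monomial_sub_monomial_eq (k : Type*) [CommRing k] (a b : V →₀ ℕ) :
    monomial a (1 : k) - monomial b 1 =
      monomial (a ⊓ b) 1 * latticeBinomial k (fun i => (a i : ℤ) - b i) := by
  have ha : a = a ⊓ b + posExp (fun i => (a i : ℤ) - b i) := by
    ext i
    simp only [posExp, Finsupp.add_apply, Finsupp.inf_apply, Finsupp.equivFunOnFinite_symm_apply_apply]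
    omega
  have hb : b = a ⊓ b + negExp (fun i => (a i : ℤ) - b i) := by
    ext i
    simp only [negExp, Finsupp.add_apply, Finsupp.inf_apply, Finsupp.equivFunOnFinite_symm_apply_apply]
    omega
  rw [latticeBinomial, mul_sub, monomial_mul, monomial_mul, ← ha, ← hb, one_mul]

lemma posExp_sub_negExp (u : V → ℤ) : (fun i => (posExp u i : ℤ) - negExp u i) = u := by
  funext i
  simp only [posExp, negExp, Finsupp.equivFunOnFinite_symm_apply_apply]
  omega

lemma monomial_sub_mem_latticeIdeal (k : Type*) [CommRing k] {L : Submodule ℤ (V → ℤ)}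
    {a b : V →₀ ℕ} (h : (fun i => (a i : ℤ) - b i) ∈ L) :
    monomial a (1 : k) - monomial b 1 ∈ latticeIdeal k L := by
  rw [monomial_sub_monomial_eq]
  exact Ideal.mul_mem_left _ _ (Ideal.subset_span ⟨_, h, rfl⟩)

lemma degQ_eq_iff {L : Submodule ℤ (V → ℤ)} {a b : V →₀ ℕ} :
    degQ L a = degQ L b ↔ (fun i => (a i : ℤ) - b i) ∈ L := by
  rw [degQ, degQ, Submodule.Quotient.eq]
  rfl

/-- The grading `degQ` of monomials by `ℤ^V / L`, as a homomorphism of monoids. -/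
noncomputable def degHom (L : Submodule ℤ (V → ℤ)) : (V →₀ ℕ) →+ ((V → ℤ) ⧸ L) where
  toFun := degQ L
  map_zero' := by
    rw [degQ, Submodule.Quotient.mk_eq_zero]
    exact L.zero_mem
  map_add' a b := by
    rw [degQ, degQ, degQ, ← Submodule.Quotient.mk_add]
    exact congrArg _ (funext fun i => Nat.cast_add _ _)

/-- The homomorphism from the polynomial ring to the group algebra of `ℤ^V / L` sending a
monomial to its degree.  Its kernel is the lattice ideal. -/
noncomputable def gradMap (k : Type*) [CommRing k] (L : Submodule ℤ (V → ℤ)) :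
    MvPolynomial V k →+* AddMonoidAlgebra k ((V → ℤ) ⧸ L) :=
  AddMonoidAlgebra.mapDomainRingHom k (degHom L)

lemma gradMap_monomial (k : Type*) [CommRing k] (L : Submodule ℤ (V → ℤ)) (a : V →₀ ℕ) (c : k) :
    gradMap k L (monomial a c) = AddMonoidAlgebra.single (degQ L a) c :=
  AddMonoidAlgebra.mapDomain_single

lemma gradMap_eq_zero_of_mem (k : Type*) [CommRing k] {L : Submodule ℤ (V → ℤ)}
    {f : MvPolynomial V k} (hf : f ∈ latticeIdeal k L) : gradMap k L f = 0 := by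
  have : latticeIdeal k L ≤ RingHom.ker (gradMap k L) := by
    refine Ideal.span_le.2 ?_
    rintro _ ⟨u, hu, rfl⟩
    rw [SetLike.mem_coe, RingHom.mem_ker, latticeBinomial, map_sub, gradMap_monomial,
      gradMap_monomial, sub_eq_zero]
    congr 1
    rw [degQ_eq_iff, posExp_sub_negExp]
    exact hu
  exact this hf

/-- The kernel of `gradMap` lies in the lattice ideal: choosing one monomial in each degree
gives a linear map back from the group algebra that inverts `gradMap` modulo the ideal. -/
lemma mem_latticeIdeal_of_gradMap_eq_zero (k : Type*) [CommRing k] {L : Submodule ℤ (V → ℤ)}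
    {f : MvPolynomial V k} (hf : gradMap k L f = 0) : f ∈ latticeIdeal k L := by
  classical
  let ρ : ((V → ℤ) ⧸ L) → (V →₀ ℕ) := Function.invFun (degQ L)
  have hρ : ∀ a, degQ L (ρ (degQ L a)) = degQ L a := fun a =>
    Function.invFun_eq (f := degQ L) ⟨a, rfl⟩
  let ψ : AddMonoidAlgebra k ((V → ℤ) ⧸ L) → MvPolynomial V k := AddMonoidAlgebra.mapDomain ρ
  have key : ∀ g : MvPolynomial V k, g - ψ (gradMap k L g) ∈ latticeIdeal k L := by
    intro g
    induction g using MvPolynomial.induction_on' with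
    | monomial a b =>
      have h1 : ψ (AddMonoidAlgebra.single (degQ L a) b) = monomial (ρ (degQ L a)) b :=
        AddMonoidAlgebra.mapDomain_single
      have h := Ideal.mul_mem_left _ (C b)
        (monomial_sub_mem_latticeIdeal k (degQ_eq_iff.1 (hρ a).symm))
      rw [mul_sub, C_mul_monomial, C_mul_monomial, mul_one] at h
      rw [gradMap_monomial, h1]
      exact h
    | add p q hp hq =>
      have h1 : ψ (gradMap k L (p + q)) = ψ (gradMap k L p) + ψ (gradMap k L q) := by
        rw [map_add]
        exact AddMonoidAlgebra.mapDomain_add _ _ _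
      rw [h1, add_sub_add_comm]
      exact Ideal.add_mem _ hp hq
  have h0 : ψ 0 = 0 := AddMonoidAlgebra.mapDomain_zero _
  simpa [hf, h0] using key f

/-- In a group algebra, a difference of two group elements is a non-zero-divisor as soon as
their quotient has infinite order: a finite nonempty support is not translation invariant. -/
lemma eq_zero_of_single_sub_single_mul {k G : Type*} [CommRing k] [AddCommGroup G]
    {α β : G} (h : ∀ m : ℕ, m • (α - β) = 0 → m = 0) {q : AddMonoidAlgebra k G}
    (hq : (AddMonoidAlgebra.single α (1 : k) - AddMonoidAlgebra.single β 1) * q = 0) : q = 0 := by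
  have step : ∀ y, q.coeff (y + (α - β)) = q.coeff y := by
    intro y
    have h1 := congrArg (fun z => z.coeff (y + α)) hq
    simp only [sub_mul, AddMonoidAlgebra.coeff_sub, Finsupp.sub_apply,
      AddMonoidAlgebra.coeff_single_mul_apply, one_mul] at h1
    have h2 : -α + (y + α) = y := by abel
    have h3 : -β + (y + α) = y + (α - β) := by abel
    rw [h2, h3] at h1
    have := sub_eq_zero.1 h1
    exact this.symm
  have iter : ∀ (m : ℕ) y, q.coeff (y + m • (α - β)) = q.coeff y := by
    intro m
    induction m with
    | zero => simp
    | succ m ih =>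
      intro y
      rw [succ_nsmul, ← add_assoc, step, ih]
  by_contra hne
  obtain ⟨y, hy⟩ : ∃ y, q.coeff y ≠ 0 := by
    by_contra! hall
    exact hne (AddMonoidAlgebra.ext (Finsupp.ext hall))
  have hinj : Function.Injective fun m : ℕ => y + m • (α - β) := by
    intro m m' hmm
    have hmm : m • (α - β) = m' • (α - β) := add_left_cancel hmm
    rcases le_total m m' with hle | hle
    · have := h (m' - m) (by rw [sub_nsmul _ hle, hmm]; simp)
      omega
    · have := h (m - m') (by rw [sub_nsmul _ hle, hmm]; simp)
      omega
  refine Set.infinite_range_of_injective hinj (Set.Finite.subset q.coeff.support.finite_toSet ?_)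
  rintro _ ⟨m, rfl⟩
  simp only [Finset.mem_coe, Finsupp.mem_support_iff]
  rw [iter]
  exact hy

end GroupAlgebra

/-! ### Koszul cohomology and dimension shifting -/

section Koszul

/-- Variables form a regular sequence: a variable outside `s` is a non-zero-divisor modulo the
variables in `s`. -/
lemma mem_span_X_of_X_mul_mem {k V : Type*} [CommRing k] {s : Set V} {j : V} (hj : j ∉ s)
    {f : MvPolynomial V k} (h : X j * f ∈ Ideal.span (X '' s : Set (MvPolynomial V k))) :
    f ∈ Ideal.span (X '' s : Set (MvPolynomial V k)) := by
  rw [mem_ideal_span_X_image] at h ⊢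
  intro m hm
  obtain ⟨i, hi, hne⟩ := h (Finsupp.single j 1 + m) (by
    rw [mem_support_iff, coeff_X_mul]
    exact mem_support_iff.1 hm)
  refine ⟨i, hi, ?_⟩
  have : j ≠ i := fun h => hj (h ▸ hi)
  simpa [Finsupp.single_apply, this] using hne

/-- Vanishing of the cohomology in degrees 1, 2 and 3 of the Koszul cochain complex of four ring
elements `x₀, x₁, x₂, x₃` on a module `M`, written out in coordinates: every 1-, 2- and
3-cocycle is a coboundary. Only the cocycle equations involving `x₀` are demanded; they imply the
others when `x₀` is a non-zero-divisor on `M`. -/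
structure KoszulAcyclic {S : Type*} [CommRing S] (x₀ x₁ x₂ x₃ : S) (M : Type*)
    [AddCommGroup M] [Module S M] : Prop where
  one : ∀ a₀ a₁ a₂ a₃ : M, x₀ • a₁ = x₁ • a₀ → x₀ • a₂ = x₂ • a₀ → x₀ • a₃ = x₃ • a₀ →
    ∃ r, a₀ = x₀ • r ∧ a₁ = x₁ • r ∧ a₂ = x₂ • r ∧ a₃ = x₃ • r
  two : ∀ b₀₁ b₀₂ b₀₃ b₁₂ b₁₃ b₂₃ : M,
    x₀ • b₁₂ - x₁ • b₀₂ + x₂ • b₀₁ = 0 → x₀ • b₁₃ - x₁ • b₀₃ + x₃ • b₀₁ = 0 →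
    x₀ • b₂₃ - x₂ • b₀₃ + x₃ • b₀₂ = 0 →
    ∃ t₀ t₁ t₂ t₃, b₀₁ = x₀ • t₁ - x₁ • t₀ ∧ b₀₂ = x₀ • t₂ - x₂ • t₀ ∧
      b₀₃ = x₀ • t₃ - x₃ • t₀ ∧ b₁₂ = x₁ • t₂ - x₂ • t₁ ∧ b₁₃ = x₁ • t₃ - x₃ • t₁ ∧
      b₂₃ = x₂ • t₃ - x₃ • t₂
  three : ∀ c₀₁₂ c₀₁₃ c₀₂₃ c₁₂₃ : M,
    x₀ • c₁₂₃ - x₁ • c₀₂₃ + x₂ • c₀₁₃ - x₃ • c₀₁₂ = 0 →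
    ∃ s₀₁ s₀₂ s₀₃ s₁₂ s₁₃ s₂₃, c₀₁₂ = x₀ • s₁₂ - x₁ • s₀₂ + x₂ • s₀₁ ∧
      c₀₁₃ = x₀ • s₁₃ - x₁ • s₀₃ + x₃ • s₀₁ ∧ c₀₂₃ = x₀ • s₂₃ - x₂ • s₀₃ + x₃ • s₀₂ ∧
      c₁₂₃ = x₁ • s₂₃ - x₂ • s₁₃ + x₃ • s₁₂

/-- A regular sequence of length four has vanishing Koszul cohomology in degrees 1, 2, 3. -/
lemma koszulAcyclic_of_regular {S : Type*} [CommRing S] {x₀ x₁ x₂ x₃ : S}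
    (r₀ : ∀ a, x₀ * a = 0 → a = 0)
    (r₁ : ∀ a b, x₁ * a = x₀ * b → ∃ c, a = x₀ * c)
    (r₂ : ∀ a b c, x₂ * a = x₀ * b + x₁ * c → ∃ b c, a = x₀ * b + x₁ * c)
    (r₃ : ∀ a b c d, x₃ * a = x₀ * b + x₁ * c + x₂ * d →
      ∃ b c d, a = x₀ * b + x₁ * c + x₂ * d) :
    KoszulAcyclic x₀ x₁ x₂ x₃ S where
  one a₀ a₁ a₂ a₃ h₁ h₂ h₃ := by
    simp only [smul_eq_mul] at *
    obtain ⟨r, rfl⟩ := r₁ a₀ a₁ h₁.symm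
    refine ⟨r, rfl, ?_, ?_, ?_⟩ <;>
    · refine sub_eq_zero.1 (r₀ _ ?_)
      first
      | linear_combination h₁
      | linear_combination h₂
      | linear_combination h₃
  two b₀₁ b₀₂ b₀₃ b₁₂ b₁₃ b₂₃ h₁ h₂ h₃ := by
    simp only [smul_eq_mul] at *
    obtain ⟨t₁, t₀', ht⟩ := r₂ b₀₁ (-b₁₂) b₀₂ (by linear_combination h₁)
    obtain ⟨t₂, ht₂⟩ := r₁ (b₀₂ - x₂ * t₀') (b₁₂ + x₂ * t₁)
      (by linear_combination -h₁ + x₂ * ht)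
    obtain ⟨t₃, ht₃⟩ := r₁ (b₀₃ - x₃ * t₀') (b₁₃ + x₃ * t₁)
      (by linear_combination -h₂ + x₃ * ht)
    refine ⟨-t₀', t₁, t₂, t₃, ?_, ?_, ?_, ?_, ?_, ?_⟩
    · linear_combination ht
    · linear_combination ht₂
    · linear_combination ht₃
    · refine sub_eq_zero.1 (r₀ _ ?_)
      linear_combination h₁ - x₂ * ht + x₁ * ht₂
    · refine sub_eq_zero.1 (r₀ _ ?_)
      linear_combination h₂ - x₃ * ht + x₁ * ht₃
    · refine sub_eq_zero.1 (r₀ _ ?_)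
      linear_combination h₃ - x₃ * ht₂ + x₂ * ht₃
  three c₀₁₂ c₀₁₃ c₀₂₃ c₁₂₃ h := by
    simp only [smul_eq_mul] at *
    obtain ⟨s₁₂, s₀₂', s₀₁, h₁⟩ := r₃ c₀₁₂ c₁₂₃ (-c₀₂₃) c₀₁₃ (by linear_combination -h)
    obtain ⟨s₁₃, s₀₃', h₂⟩ := r₂ (c₀₁₃ - x₃ * s₀₁) (-(c₁₂₃ - x₃ * s₁₂)) (c₀₂₃ + x₃ * s₀₂')
      (by linear_combination h + x₃ * h₁)
    obtain ⟨s₂₃, h₃⟩ := r₁ (c₀₂₃ + x₃ * s₀₂' - x₂ * s₀₃') (c₁₂₃ - x₃ * s₁₂ + x₂ * s₁₃)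
      (by linear_combination -h - x₃ * h₁ + x₂ * h₂)
    refine ⟨s₀₁, -s₀₂', -s₀₃', s₁₂, s₁₃, s₂₃, ?_, ?_, ?_, ?_⟩
    · linear_combination h₁
    · linear_combination h₂
    · linear_combination h₃
    · refine sub_eq_zero.1 (r₀ _ ?_)
      linear_combination h + x₃ * h₁ - x₂ * h₂ + x₁ * h₃

lemma KoszulAcyclic.pi {S : Type*} [CommRing S] {x₀ x₁ x₂ x₃ : S}
    (h : KoszulAcyclic x₀ x₁ x₂ x₃ S) (τ : Type*) : KoszulAcyclic x₀ x₁ x₂ x₃ (τ → S) where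
  one a₀ a₁ a₂ a₃ h₁ h₂ h₃ := by
    choose r e₀ e₁ e₂ e₃ using fun g => h.one (a₀ g) (a₁ g) (a₂ g) (a₃ g)
      (congrFun h₁ g) (congrFun h₂ g) (congrFun h₃ g)
    exact ⟨r, funext e₀, funext e₁, funext e₂, funext e₃⟩
  two b₀₁ b₀₂ b₀₃ b₁₂ b₁₃ b₂₃ h₁ h₂ h₃ := by
    choose t₀ t₁ t₂ t₃ e₁ e₂ e₃ e₄ e₅ e₆ using fun g =>
      h.two (b₀₁ g) (b₀₂ g) (b₀₃ g) (b₁₂ g) (b₁₃ g) (b₂₃ g)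
        (congrFun h₁ g) (congrFun h₂ g) (congrFun h₃ g)
    exact ⟨t₀, t₁, t₂, t₃, funext e₁, funext e₂, funext e₃, funext e₄, funext e₅, funext e₆⟩
  three c₀₁₂ c₀₁₃ c₀₂₃ c₁₂₃ h₁ := by
    choose s₁ s₂ s₃ s₄ s₅ s₆ e₁ e₂ e₃ e₄ using fun g =>
      h.three (c₀₁₂ g) (c₀₁₃ g) (c₀₂₃ g) (c₁₂₃ g) (congrFun h₁ g)
    exact ⟨s₁, s₂, s₃, s₄, s₅, s₆, funext e₁, funext e₂, funext e₃, funext e₄⟩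

/-- Dimension shifting along a resolution `0 → M₂ → M₁ → M₀ → R → 0` of length two by
Koszul-acyclic modules: Koszul 1-cocycles in `R` are coboundaries. -/
lemma exists_of_cocycle {S : Type*} [CommRing S] {x₀ x₁ x₂ x₃ : S} {M₀ M₁ M₂ R : Type*}
    [AddCommGroup M₀] [Module S M₀] [AddCommGroup M₁] [Module S M₁] [AddCommGroup M₂]
    [Module S M₂] [AddCommGroup R] [Module S R]
    (h₀ : KoszulAcyclic x₀ x₁ x₂ x₃ M₀) (h₁ : KoszulAcyclic x₀ x₁ x₂ x₃ M₁)
    (h₂ : KoszulAcyclic x₀ x₁ x₂ x₃ M₂)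
    (ε : M₀ →ₗ[S] R) (d₁ : M₁ →ₗ[S] M₀) (d₂ : M₂ →ₗ[S] M₁)
    (hε : Function.Surjective ε) (e₀ : ∀ m, ε m = 0 ↔ ∃ y, d₁ y = m)
    (e₁ : ∀ m, d₁ m = 0 ↔ ∃ y, d₂ y = m) (e₂ : ∀ m, d₂ m = 0 → m = 0)
    (r₀ r₁ r₂ r₃ : R) (h01 : x₀ • r₁ = x₁ • r₀) (h02 : x₀ • r₂ = x₂ • r₀)
    (h03 : x₀ • r₃ = x₃ • r₀) (h12 : x₁ • r₂ = x₂ • r₁) (h13 : x₁ • r₃ = x₃ • r₁)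
    (h23 : x₂ • r₃ = x₃ • r₂) : ∃ r, r₀ = x₀ • r := by
  obtain ⟨a₀, rfl⟩ := hε r₀
  obtain ⟨a₁, rfl⟩ := hε r₁
  obtain ⟨a₂, rfl⟩ := hε r₂
  obtain ⟨a₃, rfl⟩ := hε r₃
  have lift1 : ∀ (x y : S) (a b : M₀), x • ε b = y • ε a → ∃ z, d₁ z = x • b - y • a := by
    intro x y a b h
    rw [← e₀, map_sub, map_smul, map_smul, h, sub_self]
  obtain ⟨b₀₁, hb01⟩ := lift1 _ _ _ _ h01
  obtain ⟨b₀₂, hb02⟩ := lift1 _ _ _ _ h02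
  obtain ⟨b₀₃, hb03⟩ := lift1 _ _ _ _ h03
  obtain ⟨b₁₂, hb12⟩ := lift1 _ _ _ _ h12
  obtain ⟨b₁₃, hb13⟩ := lift1 _ _ _ _ h13
  obtain ⟨b₂₃, hb23⟩ := lift1 _ _ _ _ h23
  obtain ⟨c₀₁₂, hc012⟩ := (e₁ (x₀ • b₁₂ - x₁ • b₀₂ + x₂ • b₀₁)).1 (by
    simp only [map_add, map_sub, map_smul, hb01, hb02, hb12]; module)
  obtain ⟨c₀₁₃, hc013⟩ := (e₁ (x₀ • b₁₃ - x₁ • b₀₃ + x₃ • b₀₁)).1 (by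
    simp only [map_add, map_sub, map_smul, hb01, hb03, hb13]; module)
  obtain ⟨c₀₂₃, hc023⟩ := (e₁ (x₀ • b₂₃ - x₂ • b₀₃ + x₃ • b₀₂)).1 (by
    simp only [map_add, map_sub, map_smul, hb02, hb03, hb23]; module)
  obtain ⟨c₁₂₃, hc123⟩ := (e₁ (x₁ • b₂₃ - x₂ • b₁₃ + x₃ • b₁₂)).1 (by
    simp only [map_add, map_sub, map_smul, hb12, hb13, hb23]; module)
  obtain ⟨s₀₁, s₀₂, s₀₃, s₁₂, s₁₃, s₂₃, hs1, hs2, hs3, -⟩ := h₂.three c₀₁₂ c₀₁₃ c₀₂₃ c₁₂₃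
    (e₂ _ (by simp only [map_add, map_sub, map_smul, hc012, hc013, hc023, hc123]; module))
  have d1d2 : ∀ m, d₁ (d₂ m) = 0 := fun m => (e₁ _).2 ⟨m, rfl⟩
  obtain ⟨t₀, t₁, t₂, t₃, ht1, ht2, ht3, -⟩ := h₁.two (b₀₁ - d₂ s₀₁) (b₀₂ - d₂ s₀₂) (b₀₃ - d₂ s₀₃)
    (b₁₂ - d₂ s₁₂) (b₁₃ - d₂ s₁₃) (b₂₃ - d₂ s₂₃)
    (by rw [hs1] at hc012; simp only [map_add, map_sub, map_smul] at hc012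
        linear_combination (norm := module) -hc012)
    (by rw [hs2] at hc013; simp only [map_add, map_sub, map_smul] at hc013
        linear_combination (norm := module) -hc013)
    (by rw [hs3] at hc023; simp only [map_add, map_sub, map_smul] at hc023
        linear_combination (norm := module) -hc023)
  have aux : ∀ {b s t t₂ a a₂} {x x₂ : S}, d₁ b = x • a₂ - x₂ • a → b - d₂ s = x • t₂ - x₂ • t →
      x • (a₂ - d₁ t₂) = x₂ • (a - d₁ t) := by
    intro b s t t₂ a a₂ x x₂ hb h
    have h' := congrArg d₁ h
    simp only [map_sub, map_smul, d1d2, hb, sub_zero] at h'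
    linear_combination (norm := module) h'
  obtain ⟨r, hr, -⟩ := h₀.one (a₀ - d₁ t₀) (a₁ - d₁ t₁) (a₂ - d₁ t₂) (a₃ - d₁ t₃)
    (aux hb01 ht1) (aux hb02 ht2) (aux hb03 ht3)
  refine ⟨ε r, ?_⟩
  have h := congrArg ε hr
  rwa [map_sub, map_smul, (e₀ (d₁ t₀)).2 ⟨_, rfl⟩, sub_zero] at h

/-- Four distinct variables form a regular sequence in the polynomial ring, which is therefore
Koszul-acyclic for them. -/
lemma koszulAcyclic_X {k V : Type*} [Field k] {i₀ i₁ i₂ i₃ : V} (h01 : i₁ ≠ i₀) (h02 : i₂ ≠ i₀)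
    (h12 : i₂ ≠ i₁) (h03 : i₃ ≠ i₀) (h13 : i₃ ≠ i₁) (h23 : i₃ ≠ i₂) :
    KoszulAcyclic (X i₀ : MvPolynomial V k) (X i₁) (X i₂) (X i₃) (MvPolynomial V k) := by
  apply koszulAcyclic_of_regular
  · intro a h
    exact (mul_eq_zero.1 h).resolve_left (X_ne_zero _)
  · intro a b h
    have := mem_span_X_of_X_mul_mem (k := k) (s := {i₀}) (j := i₁) (f := a) (by simpa using h01)
      (by rw [Set.image_singleton, Ideal.mem_span_singleton]; exact ⟨b, h⟩)
    rw [Set.image_singleton, Ideal.mem_span_singleton] at this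
    exact this
  · intro a b c h
    have := mem_span_X_of_X_mul_mem (k := k) (s := {i₀, i₁}) (j := i₂) (f := a)
      (by simp [h02, h12])
      (by rw [Set.image_pair, Ideal.mem_span_pair]; exact ⟨b, c, by rw [h]; ring⟩)
    rw [Set.image_pair, Ideal.mem_span_pair] at this
    obtain ⟨b, c, h⟩ := this
    exact ⟨b, c, by rw [← h]; ring⟩
  · intro a b c d h
    have := mem_span_X_of_X_mul_mem (k := k) (s := {i₀, i₁, i₂}) (j := i₃) (f := a)
      (by simp [h03, h13, h23])
      (by
        rw [Set.image_insert_eq, Set.image_pair, Ideal.mem_span_insert]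
        exact ⟨b, _, Ideal.mem_span_pair.2 ⟨c, d, rfl⟩, by rw [h]; ring⟩)
    rw [Set.image_insert_eq, Set.image_pair, Ideal.mem_span_insert] at this
    obtain ⟨b, z, hz, h⟩ := this
    obtain ⟨c, d, rfl⟩ := Ideal.mem_span_pair.1 hz
    exact ⟨b, c, d, by rw [h]; ring⟩

end Koszul

/-! ### A basis meeting the four quadrants -/

section FourQuadrants

/-- If `S / I` has a free resolution of length two, then Koszul 1-cocycles in `S / I` for four
distinct variables are coboundaries. -/
lemma exists_sub_X_mul_mem_of_resolution {k V : Type*} [Field k] [Fintype V]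
    {I : Ideal (MvPolynomial V k)} (hI : HasFreeResolutionOfLength k I 2)
    {i₀ i₁ i₂ i₃ : V} (h01 : i₁ ≠ i₀) (h02 : i₂ ≠ i₀)
    (h12 : i₂ ≠ i₁) (h03 : i₃ ≠ i₀) (h13 : i₃ ≠ i₁) (h23 : i₃ ≠ i₂)
    (r₀ r₁ r₂ r₃ : MvPolynomial V k)
    (e01 : X i₀ * r₁ - X i₁ * r₀ ∈ I) (e02 : X i₀ * r₂ - X i₂ * r₀ ∈ I)
    (e03 : X i₀ * r₃ - X i₃ * r₀ ∈ I) (e12 : X i₁ * r₂ - X i₂ * r₁ ∈ I)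
    (e13 : X i₁ * r₃ - X i₃ * r₁ ∈ I) (e23 : X i₂ * r₃ - X i₃ * r₂ ∈ I) :
    ∃ r, r₀ - X i₀ * r ∈ I := by
  obtain ⟨σ, hfin, A, p, hemp, hsp, hA0, hA⟩ := hI
  have K := koszulAcyclic_X (k := k) h01 h02 h12 h03 h13 h23
  have mk_eq : ∀ {a b : MvPolynomial V k}, a - b ∈ I ↔ I.mkQ a = I.mkQ b := by
    intro a b
    rw [Submodule.mkQ_apply, Submodule.mkQ_apply, Submodule.Quotient.eq]
  let ε : (σ 0 → MvPolynomial V k) →ₗ[MvPolynomial V k] (MvPolynomial V k ⧸ I) :=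
    I.mkQ.comp (Fintype.linearCombination (MvPolynomial V k) p)
  have hε : ∀ v, ε v = I.mkQ (∑ g, v g * p g) := fun v => by
    simp [ε, Fintype.linearCombination_apply]
  have tr : ∀ {i j : V} {r r' : MvPolynomial V k}, X i * r' - X j * r ∈ I →
      (X i : MvPolynomial V k) • I.mkQ r' = (X j : MvPolynomial V k) • I.mkQ r := by
    intro i j r r' h
    rw [← map_smul, ← map_smul]
    exact mk_eq.1 h
  have surj : Function.Surjective ε := by
    intro y
    obtain ⟨s, rfl⟩ := I.mkQ_surjective y
    have hs : s ∈ Ideal.span (Set.range p) ⊔ I := by rw [hsp]; trivial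
    obtain ⟨a, ha, b, hb, rfl⟩ := Submodule.mem_sup.1 hs
    obtain ⟨c, hc⟩ := (Submodule.mem_span_range_iff_exists_fun _).1 ha
    refine ⟨c, ?_⟩
    rw [hε, ← mk_eq]
    have : ∑ g, c g * p g - (a + b) = -b := by
      rw [← hc]
      simp [smul_eq_mul]
    rw [this]
    exact I.neg_mem hb
  have ex0 : ∀ m, ε m = 0 ↔ ∃ y, (A 0).mulVecLin y = m := by
    intro m
    rw [hε, Submodule.mkQ_apply, Submodule.Quotient.mk_eq_zero, hA0]
    rfl
  have ex1 : ∀ m, (A 0).mulVecLin m = 0 ↔ ∃ y, (A 1).mulVecLin y = m := by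
    intro m
    rw [← LinearMap.mem_ker, hA 0]
    rfl
  have ex2 : ∀ m, (A 1).mulVecLin m = 0 → m = 0 := by
    intro m hm
    rw [← LinearMap.mem_ker, hA 1] at hm
    obtain ⟨y, rfl⟩ := hm
    have : IsEmpty (σ (1 + 1 + 1)) := hemp _ (by norm_num)
    have hy : y = 0 := Subsingleton.elim _ _
    rw [hy, map_zero]
  obtain ⟨r, hr⟩ := exists_of_cocycle (K.pi (σ 0)) (K.pi (σ 1)) (K.pi (σ 2)) ε
    (A 0).mulVecLin (A 1).mulVecLin surj ex0 ex1 ex2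
    (I.mkQ r₀) (I.mkQ r₁) (I.mkQ r₂) (I.mkQ r₃)
    (tr e01) (tr e02) (tr e03) (tr e12) (tr e13) (tr e23)
  obtain ⟨r, rfl⟩ := I.mkQ_surjective r
  refine ⟨r, mk_eq.2 ?_⟩
  rw [hr, ← map_smul, smul_eq_mul]

/-- A relation `x^m ≡ x_p t` modulo the lattice ideal forces a monomial of degree
`deg m - deg x_p` to exist. -/
lemma exists_degQ_of_sub_X_mul_mem {k V : Type*} [Field k] [Fintype V]
    {L : Submodule ℤ (V → ℤ)} {m : V →₀ ℕ} {p : V} {t : MvPolynomial V k}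
    (ht : monomial m 1 - X p * t ∈ latticeIdeal k L) :
    ∃ c : V →₀ ℕ, degQ L (Finsupp.single p 1 + c) = degQ L m := by
  by_contra! hne
  have h := gradMap_eq_zero_of_mem k ht
  rw [map_sub, sub_eq_zero, gradMap_monomial] at h
  have h1 := congrArg (fun z => z.coeff (degQ L m)) h
  have h2 : ∀ t : MvPolynomial V k, (gradMap k L (X p * t)).coeff (degQ L m) = 0 := by
    intro t
    induction t using MvPolynomial.induction_on' with
    | monomial c b =>
      rw [X, monomial_mul, gradMap_monomial, AddMonoidAlgebra.coeff_single,
        Finsupp.single_eq_of_ne (Ne.symm (hne c))]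
    | add f g hf hg =>
      rw [mul_add, map_add, AddMonoidAlgebra.coeff_add, Finsupp.add_apply, hf, hg, add_zero]
  simp only [h2, AddMonoidAlgebra.coeff_single, Finsupp.single_eq_same] at h1
  exact one_ne_zero h1

/-- The least vector `a` such that `a`, `a + u`, `a + v` and `a + u + v` are nonnegative. -/
def squareBase {n : ℕ} (u v : Fin n → ℤ) (j : Fin n) : ℤ :=
  max (max 0 (-u j)) (max (-v j) (-u j - v j))

/-- The vector `a + α u + β v - e_p - e_q - e_r - e_s`, where `a` is `squareBase u v`. -/
def cornerVec {n : ℕ} (u v : Fin n → ℤ) (p q r s : Fin n) (α β : ℤ) (j : Fin n) : ℤ :=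
  squareBase u v j + α * u j + β * v j - (if j = p then 1 else 0) - (if j = q then 1 else 0) -
    (if j = r then 1 else 0) - (if j = s then 1 else 0)

section
variable {n : ℕ} {u v : Fin n → ℤ} {p q r s : Fin n}

/-- Each corner of the unit square is the unique minimizer on the square of a row from one of
the four quadrants, so only the coordinate of that row can be negative. -/
lemma cornerVec_nonneg (hp : 0 < u p ∧ 0 < v p) (hq : 0 < u q ∧ v q < 0)
    (hr : u r < 0 ∧ 0 < v r) (hs : u s < 0 ∧ v s < 0) (j : Fin n) :
    0 ≤ cornerVec u v p q r s 0 0 j + (if j = p then 1 else 0) ∧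
    0 ≤ cornerVec u v p q r s 0 1 j + (if j = q then 1 else 0) ∧
    0 ≤ cornerVec u v p q r s 1 0 j + (if j = r then 1 else 0) ∧
    0 ≤ cornerVec u v p q r s 1 1 j + (if j = s then 1 else 0) := by
  have hqp : q ≠ p := by rintro rfl; omega
  have hrp : r ≠ p := by rintro rfl; omega
  have hrq : r ≠ q := by rintro rfl; omega
  have hsp : s ≠ p := by rintro rfl; omega
  have hsq : s ≠ q := by rintro rfl; omega
  have hsr : s ≠ r := by rintro rfl; omega
  simp only [cornerVec, squareBase]
  by_cases h1 : j = p
  · subst h1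
    simp only [if_pos, if_neg hqp.symm, if_neg hrp.symm, if_neg hsp.symm]
    omega
  by_cases h2 : j = q
  · subst h2
    simp only [if_pos, if_neg hqp, if_neg hrq.symm, if_neg hsq.symm]
    omega
  by_cases h3 : j = r
  · subst h3
    simp only [if_pos, if_neg hrp, if_neg hrq, if_neg hsr.symm]
    omega
  by_cases h4 : j = s
  · subst h4
    simp only [if_pos, if_neg hsp, if_neg hsq, if_neg hsr]
    omega
  simp only [if_neg h1, if_neg h2, if_neg h3, if_neg h4]
  omega

/-- The four rows cut out exactly the unit square, and at each of its corners one of the four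
coordinates is negative. -/
lemma cornerVec_not_nonneg (hp : 0 < u p ∧ 0 < v p) (hq : 0 < u q ∧ v q < 0)
    (hr : u r < 0 ∧ 0 < v r) (hs : u s < 0 ∧ v s < 0) (α β : ℤ)
    (h : ∀ j, 0 ≤ cornerVec u v p q r s α β j) : False := by
  have hqp : q ≠ p := by rintro rfl; omega
  have hrp : r ≠ p := by rintro rfl; omega
  have hrq : r ≠ q := by rintro rfl; omega
  have hsp : s ≠ p := by rintro rfl; omega
  have hsq : s ≠ q := by rintro rfl; omega
  have hsr : s ≠ r := by rintro rfl; omega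
  have ip : 0 < α * u p + β * v p := by
    have h := h p
    simp only [cornerVec, squareBase, if_pos, if_neg hqp.symm, if_neg hrp.symm,
      if_neg hsp.symm] at h
    omega
  have iq : 0 < α * u q + (β - 1) * v q := by
    have h := h q
    simp only [cornerVec, squareBase, if_pos, if_neg hqp, if_neg hrq.symm, if_neg hsq.symm] at h
    rw [sub_mul]
    omega
  have ir : 0 < (α - 1) * u r + β * v r := by
    have h := h r
    simp only [cornerVec, squareBase, if_pos, if_neg hrp, if_neg hrq, if_neg hsr.symm] at h
    rw [sub_mul]
    omega
  have is : 0 < (α - 1) * u s + (β - 1) * v s := by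
    have h := h s
    simp only [cornerVec, squareBase, if_pos, if_neg hsp, if_neg hsq, if_neg hsr] at h
    rw [sub_mul, sub_mul]
    omega
  rcases le_or_gt α 0 with hα | hα <;> rcases le_or_gt β 0 with hβ | hβ
  · nlinarith [mul_nonneg (neg_nonneg.2 hα) hp.1.le, mul_nonneg (neg_nonneg.2 hβ) hp.2.le]
  · nlinarith [mul_nonneg (neg_nonneg.2 hα) hq.1.le,
      mul_nonneg (sub_nonneg.2 (Int.add_one_le_iff.2 hβ)) (neg_nonneg.2 hq.2.le)]
  · nlinarith [mul_nonneg (neg_nonneg.2 hβ) hr.2.le,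
      mul_nonneg (sub_nonneg.2 (Int.add_one_le_iff.2 hα)) (neg_nonneg.2 hr.1.le)]
  · nlinarith [mul_nonneg (sub_nonneg.2 (Int.add_one_le_iff.2 hβ)) (neg_nonneg.2 hs.2.le),
      mul_nonneg (sub_nonneg.2 (Int.add_one_le_iff.2 hα)) (neg_nonneg.2 hs.1.le)]

/-- If the rows of a basis `(u, v)` of `L` meet all four open quadrants, then there is no free
resolution of length two.  With `D` the degree of `cornerVec u v p q r s 0 0`, no monomial has
degree `D`, but `D` plus the degree of any of the four variables is the degree of a monomial, one
for each corner of the unit square.  These four monomials are a Koszul 1-cocycle in the quotient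
that is not a coboundary. -/
lemma not_resolution_of_quadrants (k : Type*) [Field k] {L : Submodule ℤ (Fin n → ℤ)}
    (hL : ∀ w, w ∈ L ↔ ∃ α β : ℤ, w = α • u + β • v)
    (hp : 0 < u p ∧ 0 < v p) (hq : 0 < u q ∧ v q < 0)
    (hr : u r < 0 ∧ 0 < v r) (hs : u s < 0 ∧ v s < 0) :
    ¬ HasFreeResolutionOfLength k (latticeIdeal k L) 2 := by
  intro hres
  have hqp : q ≠ p := by rintro rfl; omega
  have hrp : r ≠ p := by rintro rfl; omega
  have hrq : r ≠ q := by rintro rfl; omega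
  have hsp : s ≠ p := by rintro rfl; omega
  have hsq : s ≠ q := by rintro rfl; omega
  have hsr : s ≠ r := by rintro rfl; omega
  have lift : ∀ (i : Fin n) (α β : ℤ),
      (∀ j, 0 ≤ cornerVec u v p q r s α β j + (if j = i then 1 else 0)) →
      ∃ m : Fin n →₀ ℕ, ∀ j, (m j : ℤ) =
        cornerVec u v p q r s α β j + (if j = i then 1 else 0) := by
    intro i α β h
    refine ⟨posExp fun j => cornerVec u v p q r s α β j + (if j = i then 1 else 0), fun j => ?_⟩
    rw [posExp, Finsupp.equivFunOnFinite_symm_apply_apply]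
    exact Int.toNat_of_nonneg (h j)
  have hnn := cornerVec_nonneg hp hq hr hs
  obtain ⟨mp, cp⟩ := lift p 0 0 fun j => (hnn j).1
  obtain ⟨mq, cq⟩ := lift q 0 1 fun j => (hnn j).2.1
  obtain ⟨mr, cr⟩ := lift r 1 0 fun j => (hnn j).2.2.1
  obtain ⟨ms, cs⟩ := lift s 1 1 fun j => (hnn j).2.2.2
  have e : ∀ i j : Fin n, ((Finsupp.single i 1 : Fin n →₀ ℕ) j : ℤ) = if j = i then 1 else 0 := by
    intro i j
    rw [Finsupp.single_apply]
    simp only [eq_comm (a := i)]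
    split_ifs <;> simp
  have rel : ∀ {i i' : Fin n} {α β α' β' : ℤ} {m m' : Fin n →₀ ℕ},
      (∀ j, (m j : ℤ) = cornerVec u v p q r s α β j + (if j = i then 1 else 0)) →
      (∀ j, (m' j : ℤ) = cornerVec u v p q r s α' β' j + (if j = i' then 1 else 0)) →
      X i * monomial m' (1 : k) - X i' * monomial m 1 ∈ latticeIdeal k L := by
    intro i i' α β α' β' m m' h h'
    rw [X, X, monomial_mul, monomial_mul, one_mul]
    apply monomial_sub_mem_latticeIdeal
    rw [hL]
    refine ⟨α' - α, β' - β, funext fun j => ?_⟩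
    simp only [Finsupp.add_apply, Nat.cast_add, e, h, h', Pi.add_apply, Pi.smul_apply,
      smul_eq_mul, cornerVec]
    ring
  obtain ⟨t, ht⟩ := exists_sub_X_mul_mem_of_resolution hres hqp hrp hrq hsp hsq hsr
    (monomial mp 1) (monomial mq 1) (monomial mr 1) (monomial ms 1)
    (rel cp cq) (rel cp cr) (rel cp cs) (rel cq cr) (rel cq cs) (rel cr cs)
  obtain ⟨c, hc⟩ := exists_degQ_of_sub_X_mul_mem ht
  rw [degQ_eq_iff, hL] at hc
  obtain ⟨α, β, hαβ⟩ := hc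
  refine cornerVec_not_nonneg hp hq hr hs α β fun j => ?_
  have h := congrFun hαβ j
  simp only [Finsupp.add_apply, Nat.cast_add, e, cp, Pi.add_apply, Pi.smul_apply,
    smul_eq_mul, cornerVec] at h
  simp only [cornerVec]
  have := Int.natCast_nonneg (c j)
  linarith

end

end FourQuadrants

/-! ### Binomial generators of the lattice ideal -/

section Generators

variable {V : Type*} [Fintype V]

/-- Linear independence over `ℤ` of two integer vectors. -/
def Indep (u v : V → ℤ) : Prop := ∀ α β : ℤ, α • u + β • v = 0 → α = 0 ∧ β = 0

lemma latticeBinomial_neg (k : Type*) [CommRing k] (u : V → ℤ) :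
    latticeBinomial k (-u) = -latticeBinomial k u := by
  simp [latticeBinomial, posExp, negExp]

lemma latticeBinomial_ne_zero (k : Type*) [Field k] {u : V → ℤ} (hu : u ≠ 0) :
    latticeBinomial k u ≠ 0 := by
  intro h
  have h1 := monomial_left_injective (R := k) one_ne_zero (sub_eq_zero.1 h)
  apply hu
  rw [← posExp_sub_negExp u, h1]
  funext i
  simp

/-- If `x^{u₊} - x^{u₋} ∈ J`, then monomials whose exponents differ by a multiple of `u` agree
modulo `J`: all exponents on the segment between them are nonnegative. -/
lemma monomial_sub_mem_of_line {k : Type*} [CommRing k] {J : Ideal (MvPolynomial V k)}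
    {u : V → ℤ} (hu : latticeBinomial k u ∈ J) (p : ℕ) :
    ∀ a b : V →₀ ℕ, (∀ i, (b i : ℤ) = a i + p * u i) →
      monomial b (1 : k) - monomial a 1 ∈ J := by
  induction p with
  | zero =>
    intro a b h
    have : b = a := by
      ext i
      have := h i
      simp only [Nat.cast_zero, zero_mul, add_zero] at this
      exact_mod_cast this
    rw [this, sub_self]
    exact J.zero_mem
  | succ p ih =>
    intro a b h
    have hc : ∀ i, 0 ≤ (a i : ℤ) + u i := by
      intro i
      have h1 := h i
      push_cast at h1
      rcases le_or_gt 0 (u i) with h2 | h2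
      · omega
      · have : (p : ℤ) * u i ≤ 0 := mul_nonpos_of_nonneg_of_nonpos (by positivity) h2.le
        have h3 : ((p : ℤ) + 1) * u i = p * u i + u i := by ring
        omega
    let c : V →₀ ℕ := posExp fun i => (a i : ℤ) + u i
    have hc' : ∀ i, (c i : ℤ) = a i + u i := fun i => by
      simp only [c, posExp, Finsupp.equivFunOnFinite_symm_apply_apply]
      exact Int.toNat_of_nonneg (hc i)
    have h1 : monomial b (1 : k) - monomial c 1 ∈ J := ih c b fun i => by
      rw [h, hc']
      push_cast
      ring
    have h2 : monomial c (1 : k) - monomial a 1 ∈ J := by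
      rw [monomial_sub_monomial_eq]
      have : (fun i => (c i : ℤ) - a i) = u := funext fun i => by rw [hc']; ring
      rw [this]
      exact J.mul_mem_left _ hu
    have := J.add_mem h1 h2
    rwa [sub_add_sub_cancel] at this

/-- Coprimality of the binomials of independent vectors `u`, `v`: modulo `x^{u₊} - x^{u₋}`, the
polynomial ring embeds in the group algebra of `ℤ^V / ℤu`, where `v` has infinite order. -/
lemma latticeBinomial_dvd_of_dvd_mul (k : Type*) [Field k] {u v : V → ℤ} (h : Indep u v)
    {f : MvPolynomial V k} (hf : latticeBinomial k u ∣ latticeBinomial k v * f) :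
    latticeBinomial k u ∣ f := by
  set L := Submodule.span ℤ {u} with hL
  have huL : u ∈ L := Submodule.mem_span_singleton_self u
  have hu : latticeBinomial k u ∈ latticeIdeal k L := Ideal.subset_span ⟨u, huL, rfl⟩
  have hle : latticeIdeal k L ≤ Ideal.span {latticeBinomial k u} := by
    refine Ideal.span_le.2 ?_
    rintro _ ⟨w, hw, rfl⟩
    obtain ⟨α, rfl⟩ := Submodule.mem_span_singleton.1 hw
    have key : ∀ p : ℕ, latticeBinomial k ((p : ℤ) • u) ∈ Ideal.span {latticeBinomial k u} := by
      intro p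
      refine monomial_sub_mem_of_line (u := u) (Ideal.mem_span_singleton_self _) p _ _ fun i => ?_
      have := congrFun (posExp_sub_negExp ((p : ℤ) • u)) i
      simp only [Pi.smul_apply, smul_eq_mul] at this
      linarith
    obtain ⟨p, rfl | rfl⟩ := α.eq_nat_or_neg
    · exact key p
    · rw [neg_smul, latticeBinomial_neg]
      exact neg_mem (key p)
  rw [← Ideal.mem_span_singleton]
  apply hle
  apply mem_latticeIdeal_of_gradMap_eq_zero
  have h1 : latticeBinomial k v * f ∈ latticeIdeal k L := by
    obtain ⟨g, hg⟩ := hf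
    rw [hg]
    exact Ideal.mul_mem_right _ _ hu
  have h2 := gradMap_eq_zero_of_mem k h1
  rw [map_mul, latticeBinomial, map_sub, gradMap_monomial, gradMap_monomial] at h2
  refine eq_zero_of_single_sub_single_mul ?_ h2
  intro m hm
  have hd : degQ L (posExp v) - degQ L (negExp v) = Submodule.Quotient.mk v := by
    rw [degQ, degQ, ← Submodule.Quotient.mk_sub]
    exact congrArg _ (posExp_sub_negExp v)
  rw [hd, ← natCast_zsmul, ← Submodule.Quotient.mk_smul, Submodule.Quotient.mk_eq_zero,
    Submodule.mem_span_singleton] at hm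
  obtain ⟨α, hα⟩ := hm
  have := (h α (-m) (by rw [hα, neg_smul, add_neg_cancel])).2
  omega

/-- The rows of `(u, v)` miss the first or the third open quadrant. -/
def MissesDiagonal (u v : V → ℤ) : Prop :=
  (∀ i, ¬ (0 < u i ∧ 0 < v i)) ∨ (∀ i, ¬ (u i < 0 ∧ v i < 0))

/-- If the rows of `(u, v)` miss the first or the third quadrant, then two monomials whose
exponents differ by `p u - q v` with `p, q ≥ 0` are connected by a path of two segments, in
directions `u` and `v`. -/
lemma monomial_sub_mem_of_missesDiagonal {k : Type*} [CommRing k] {J : Ideal (MvPolynomial V k)}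
    {u v : V → ℤ} (hu : latticeBinomial k u ∈ J) (hv : latticeBinomial k v ∈ J)
    (h : MissesDiagonal u v) (p q : ℕ) {w : V → ℤ} (hw : w = (p : ℤ) • u - (q : ℤ) • v) :
    latticeBinomial k w ∈ J := by
  have hw' : ∀ i, (posExp w i : ℤ) = negExp w i + p * u i - q * v i := by
    intro i
    have := congrFun (posExp_sub_negExp w) i
    rw [hw] at this
    simp only [Pi.sub_apply, Pi.smul_apply, smul_eq_mul] at this
    rw [hw]
    linarith
  have hp : (0 : ℤ) ≤ p := by positivity
  have hq : (0 : ℤ) ≤ q := by positivity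
  rcases h with h | h
  · have hc : ∀ i, 0 ≤ (negExp w i : ℤ) - q * v i := by
      intro i
      rcases le_or_gt (v i) 0 with h1 | h1
      · have := mul_nonpos_of_nonneg_of_nonpos hq h1
        omega
      · have h2 : u i ≤ 0 := not_lt.1 fun h2 => h i ⟨h2, h1⟩
        have := mul_nonpos_of_nonneg_of_nonpos hp h2
        have := hw' i
        omega
    let c : V →₀ ℕ := posExp fun i => (negExp w i : ℤ) - q * v i
    have hc' : ∀ i, (c i : ℤ) = negExp w i - q * v i := fun i => by
      simp only [c]
      rw [posExp, Finsupp.equivFunOnFinite_symm_apply_apply]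
      exact Int.toNat_of_nonneg (hc i)
    have h1 : monomial (posExp w) (1 : k) - monomial c 1 ∈ J :=
      monomial_sub_mem_of_line hu p _ _ fun i => by rw [hc', hw']; ring
    have h2 : monomial (negExp w) (1 : k) - monomial c 1 ∈ J :=
      monomial_sub_mem_of_line hv q _ _ fun i => by rw [hc']; ring
    have := J.sub_mem h1 h2
    rwa [sub_sub_sub_cancel_right] at this
  · have hc : ∀ i, 0 ≤ (negExp w i : ℤ) + p * u i := by
      intro i
      rcases le_or_gt 0 (u i) with h1 | h1
      · have := mul_nonneg hp h1
        omega
      · have h2 : 0 ≤ v i := not_lt.1 fun h2 => h i ⟨h1, h2⟩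
        have := mul_nonneg hq h2
        have := hw' i
        omega
    let c : V →₀ ℕ := posExp fun i => (negExp w i : ℤ) + p * u i
    have hc' : ∀ i, (c i : ℤ) = negExp w i + p * u i := fun i => by
      simp only [c]
      rw [posExp, Finsupp.equivFunOnFinite_symm_apply_apply]
      exact Int.toNat_of_nonneg (hc i)
    have h1 : monomial c (1 : k) - monomial (negExp w) 1 ∈ J :=
      monomial_sub_mem_of_line hu p _ _ hc'
    have h2 : monomial c (1 : k) - monomial (posExp w) 1 ∈ J :=
      monomial_sub_mem_of_line hv q _ _ fun i => by rw [hc', hw']; ring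
    have := J.sub_mem h1 h2
    rwa [sub_sub_sub_cancel_left] at this

/-- `(u, v)` is a `ℤ`-basis of the lattice `L`. -/
structure IsPairBasis (L : Submodule ℤ (V → ℤ)) (u v : V → ℤ) : Prop where
  indep : Indep u v
  mem_iff : ∀ w, w ∈ L ↔ ∃ α β : ℤ, w = α • u + β • v

/-- The rows of `(u, v)` miss a quadrant on each of the two diagonals: the lattice ideal is a
complete intersection. -/
lemma latticeIdeal_eq_span_pair (k : Type*) [CommRing k] {L : Submodule ℤ (V → ℤ)}
    {u v : V → ℤ} (hL : IsPairBasis L u v) (h₁ : MissesDiagonal u v)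
    (h₂ : MissesDiagonal u (-v)) :
    latticeIdeal k L = Ideal.span {latticeBinomial k u, latticeBinomial k v} := by
  apply le_antisymm
  · refine Ideal.span_le.2 ?_
    rintro _ ⟨w, hw, rfl⟩
    obtain ⟨α, β, rfl⟩ := (hL.mem_iff w).1 hw
    have hu : latticeBinomial k u ∈ Ideal.span {latticeBinomial k u, latticeBinomial k v} :=
      Ideal.subset_span (by simp)
    have hv : latticeBinomial k v ∈ Ideal.span {latticeBinomial k u, latticeBinomial k v} :=
      Ideal.subset_span (by simp)
    have hv' : latticeBinomial k (-v) ∈ Ideal.span {latticeBinomial k u, latticeBinomial k v} := by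
      rw [latticeBinomial_neg]
      exact neg_mem hv
    obtain ⟨p, rfl | rfl⟩ := α.eq_nat_or_neg <;> obtain ⟨q, rfl | rfl⟩ := β.eq_nat_or_neg
    · exact monomial_sub_mem_of_missesDiagonal hu hv' h₂ p q (by module)
    · exact monomial_sub_mem_of_missesDiagonal hu hv h₁ p q (by module)
    · rw [SetLike.mem_coe, ← neg_mem_iff, ← latticeBinomial_neg]
      exact monomial_sub_mem_of_missesDiagonal hu hv h₁ p q (by module)
    · rw [SetLike.mem_coe, ← neg_mem_iff, ← latticeBinomial_neg]
      exact monomial_sub_mem_of_missesDiagonal hu hv' h₂ p q (by module)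
  · rw [Ideal.span_le]
    rintro _ (rfl | rfl)
    · exact Ideal.subset_span ⟨u, (hL.mem_iff u).2 ⟨1, 0, by simp⟩, rfl⟩
    · exact Ideal.subset_span ⟨v, (hL.mem_iff v).2 ⟨0, 1, by simp⟩, rfl⟩

/-- If the three pairs among `u, v, -(u + v)` each miss a quadrant on the main diagonal, then
their binomials generate: the six cones spanned by `u` and `u + v`, by `u` and `-v`, etc., cover
the lattice. -/
lemma latticeIdeal_eq_span_triple (k : Type*) [CommRing k] {L : Submodule ℤ (V → ℤ)}
    {u v w : V → ℤ} (hL : IsPairBasis L u v) (hw : w = -(u + v)) (huv : MissesDiagonal u v)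
    (huw : MissesDiagonal u w) (hvw : MissesDiagonal v w) :
    latticeIdeal k L =
      Ideal.span {latticeBinomial k u, latticeBinomial k v, latticeBinomial k w} := by
  apply le_antisymm
  · refine Ideal.span_le.2 ?_
    rintro _ ⟨z, hz, rfl⟩
    obtain ⟨α, β, rfl⟩ := (hL.mem_iff z).1 hz
    set J := Ideal.span {latticeBinomial k u, latticeBinomial k v, latticeBinomial k w}
    have hu : latticeBinomial k u ∈ J := Ideal.subset_span (by simp)
    have hv : latticeBinomial k v ∈ J := Ideal.subset_span (by simp)
    have hw' : latticeBinomial k w ∈ J := Ideal.subset_span (by simp)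
    -- nonnegative combinations of `u` and `v`, split along the diagonal `u + v = -w`
    have key : ∀ p q : ℕ, latticeBinomial k ((p : ℤ) • u + (q : ℤ) • v) ∈ J := by
      intro p q
      rcases le_total q p with hpq | hpq
      · obtain ⟨d, rfl⟩ := Nat.exists_eq_add_of_le hpq
        exact monomial_sub_mem_of_missesDiagonal hu hw' huw d q (by rw [hw]; push_cast; module)
      · obtain ⟨d, rfl⟩ := Nat.exists_eq_add_of_le hpq
        exact monomial_sub_mem_of_missesDiagonal hv hw' hvw d p (by rw [hw]; push_cast; module)
    obtain ⟨p, rfl | rfl⟩ := α.eq_nat_or_neg <;> obtain ⟨q, rfl | rfl⟩ := β.eq_nat_or_neg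
    · exact key p q
    · exact monomial_sub_mem_of_missesDiagonal hu hv huv p q (by module)
    · rw [SetLike.mem_coe, ← neg_mem_iff, ← latticeBinomial_neg]
      exact monomial_sub_mem_of_missesDiagonal hu hv huv p q (by module)
    · rw [SetLike.mem_coe, ← neg_mem_iff, ← latticeBinomial_neg]
      convert key p q using 2
      module
  · rw [Ideal.span_le]
    rintro _ (rfl | rfl | rfl)
    · exact Ideal.subset_span ⟨u, (hL.mem_iff u).2 ⟨1, 0, by simp⟩, rfl⟩
    · exact Ideal.subset_span ⟨v, (hL.mem_iff v).2 ⟨0, 1, by simp⟩, rfl⟩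
    · exact Ideal.subset_span ⟨w, (hL.mem_iff w).2 ⟨-1, -1, by rw [hw]; module⟩, rfl⟩

end Generators

/-! ### Resolutions of length two -/

section Resolutions

variable {V : Type*} [Fintype V]

/-- The index sets of a complex `S^s → S^r → S`. -/
def resIndex (r s : ℕ) : ℕ → Type
  | 0 => Fin 1
  | 1 => Fin r
  | 2 => Fin s
  | _ => Fin 0

/-- Finiteness of the index sets of `resIndex`. -/
instance resIndexFintype (r s : ℕ) : ∀ j, Fintype (resIndex r s j)
  | 0 => inferInstanceAs (Fintype (Fin 1))
  | 1 => inferInstanceAs (Fintype (Fin r))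
  | 2 => inferInstanceAs (Fintype (Fin s))
  | _ + 3 => inferInstanceAs (Fintype (Fin 0))

/-- The differentials of the complex `S^s → S^r → S` given by a matrix `N` and a row `f`. -/
def resMatrix {S : Type*} [CommRing S] {r s : ℕ} (f : Fin r → S) (N : Matrix (Fin r) (Fin s) S) :
    ∀ j, Matrix (resIndex r s j) (resIndex r s (j + 1)) S
  | 0 => fun _ (i : Fin r) => f i
  | 1 => N
  | _ + 2 => fun _ => Fin.elim0

/-- An exact complex `0 → S^s → S^r → S` with image `I` in `S` is a resolution of `S / I` of
length two. -/
lemma hasFreeResolution_of_exact (k : Type*) [Field k] {I : Ideal (MvPolynomial V k)} {r s : ℕ}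
    (f : Fin r → MvPolynomial V k) (N : Matrix (Fin r) (Fin s) (MvPolynomial V k))
    (hI : I = Ideal.span (Set.range f))
    (hex : ∀ a : Fin r → MvPolynomial V k, ∑ i, f i * a i = 0 ↔ ∃ t, N.mulVec t = a)
    (hinj : ∀ t, N.mulVec t = 0 → t = 0) :
    HasFreeResolutionOfLength k I 2 := by
  refine ⟨resIndex r s, resIndexFintype r s, resMatrix f N, fun _ => 1, ?_, ?_, ?_, ?_⟩
  · intro j hj
    obtain ⟨j, rfl⟩ := Nat.exists_eq_add_of_le' (show 3 ≤ j from hj)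
    exact inferInstanceAs (IsEmpty (Fin 0))
  · have : (1 : MvPolynomial V k) ∈ Ideal.span (Set.range
        (fun _ : resIndex r s 0 => (1 : MvPolynomial V k))) :=
      Ideal.subset_span ⟨(0 : Fin 1), rfl⟩
    rw [(Ideal.eq_top_iff_one _).2 this, top_sup_eq]
  · intro (v : Fin 1 → MvPolynomial V k)
    change (∑ g : Fin 1, v g * 1) ∈ I ↔ ∃ t : Fin r → MvPolynomial V k,
      (fun _ : Fin 1 => ∑ i, f i * t i) = v
    rw [hI, Ideal.mem_span_range_iff_exists_fun]
    simp only [Fin.sum_univ_one, mul_one]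
    constructor
    · rintro ⟨c, hc⟩
      refine ⟨c, funext fun g => ?_⟩
      rw [Subsingleton.elim g 0, ← hc]
      exact Finset.sum_congr rfl fun i _ => mul_comm _ _
    · rintro ⟨c, rfl⟩
      exact ⟨c, Finset.sum_congr rfl fun i _ => mul_comm _ _⟩
  · intro j
    match j with
    | 0 =>
      ext a
      change (fun _ : Fin 1 => ∑ i : Fin r, f i * a i) = 0 ↔
        ∃ t : Fin s → MvPolynomial V k, N.mulVec t = a
      rw [← hex a]
      exact ⟨fun h => congrFun h 0, fun h => funext fun _ => h⟩
    | 1 =>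
      ext a
      constructor
      · intro h
        have : a = 0 := hinj a h
        rw [this]
        exact Submodule.zero_mem _
      · rintro ⟨t, rfl⟩
        -- The source of the map `0 → S^s` is a trivial module.
        have ht : t = 0 := funext fun i => (Fin.elim0 i)
        rw [ht, map_zero]
        exact Submodule.zero_mem _
    | j + 2 =>
      ext a
      have : a = 0 := funext fun i => (Fin.elim0 i)
      rw [this]
      exact ⟨fun _ => Submodule.zero_mem _, fun _ => Submodule.zero_mem _⟩

/-- The Koszul resolution of a complete intersection of codimension two. -/
lemma hasFreeResolution_span_pair (k : Type*) [Field k] {f₁ f₂ : MvPolynomial V k} (h₁ : f₁ ≠ 0)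
    (h₂ : ∀ g, f₁ ∣ f₂ * g → f₁ ∣ g) :
    HasFreeResolutionOfLength k (Ideal.span {f₁, f₂}) 2 := by
  refine hasFreeResolution_of_exact k ![f₁, f₂] !![-f₂; f₁] ?_ ?_ ?_
  · simp [Matrix.range_cons, Set.pair_comm]
  · intro a
    constructor
    · intro h
      simp only [Fin.sum_univ_two, Matrix.cons_val_zero, Matrix.cons_val_one] at h
      obtain ⟨g, hg⟩ := h₂ (a 1) ⟨-a 0, by linear_combination h⟩
      refine ⟨![g], funext fun i => ?_⟩
      have : a 0 = -f₂ * g := mul_left_cancel₀ h₁ (by rw [hg] at h; linear_combination h)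
      fin_cases i
      · simp [Matrix.mulVec, dotProduct, this]
      · simp [Matrix.mulVec, dotProduct, hg]
    · rintro ⟨t, rfl⟩
      simp [Fin.sum_univ_two, Matrix.mulVec, dotProduct]
      ring
  · intro t ht
    have := congrFun ht 1
    simp [Matrix.mulVec, dotProduct, h₁] at this
    funext i
    rw [Subsingleton.elim i 0, this]
    rfl

/-- The Hilbert–Burch resolution of the ideal of `2 × 2` minors `f` of the matrix with
columns `C`, `D`. -/
lemma hasFreeResolution_minors (k : Type*) [Field k] {C D f : Fin 3 → MvPolynomial V k}
    (hf₀ : f 0 = C 1 * D 2 - C 2 * D 1) (hf₁ : f 1 = C 2 * D 0 - C 0 * D 2)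
    (hf₂ : f 2 = C 0 * D 1 - C 1 * D 0) (h₁ : f 0 ≠ 0) (h₂ : ∀ g, f 0 ∣ f 1 * g → f 0 ∣ g) :
    HasFreeResolutionOfLength k (Ideal.span (Set.range f)) 2 := by
  have hN : ∀ t : Fin 2 → MvPolynomial V k,
      (Matrix.of fun i j => ![C i, D i] j).mulVec t = fun i => C i * t 0 + D i * t 1 := by
    intro t
    funext i
    simp [Matrix.mulVec, dotProduct, Fin.sum_univ_two]
  refine hasFreeResolution_of_exact k f (Matrix.of fun i j => ![C i, D i] j) rfl ?_ ?_
  · intro a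
    simp only [hN, Fin.sum_univ_three]
    constructor
    · intro h
      -- Cramer's rule gives `f 0 • a` as a combination of the columns; its coefficients are
      -- divisible by `f 0`.
      obtain ⟨s, hs⟩ := h₂ (a 1 * D 2 - a 2 * D 1) ⟨a 2 * D 0 - a 0 * D 2, by
        rw [hf₀, hf₁, hf₂] at h; rw [hf₀, hf₁]; linear_combination (D 2) * h⟩
      obtain ⟨t, ht⟩ := h₂ (C 1 * a 2 - C 2 * a 1) ⟨C 2 * a 0 - C 0 * a 2, by
        rw [hf₀, hf₁, hf₂] at h; rw [hf₀, hf₁]; linear_combination (-C 2) * h⟩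
      refine ⟨![s, t], funext fun i => mul_left_cancel₀ h₁ ?_⟩
      have e : f 0 * (C i * ![s, t] 0 + D i * ![s, t] 1) =
          C i * (a 1 * D 2 - a 2 * D 1) + D i * (C 1 * a 2 - C 2 * a 1) := by
        rw [hs, ht]
        simp only [Matrix.cons_val_zero, Matrix.cons_val_one]
        ring
      rw [e]
      rw [hf₀, hf₁, hf₂] at h
      rw [hf₀]
      fin_cases i
      · simp only [Fin.zero_eta]
        linear_combination (-1 : MvPolynomial V k) * h
      · simp only [Fin.mk_one]
        ring
      · simp only [Fin.reduceFinMk]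
        ring
    · rintro ⟨t, rfl⟩
      rw [hf₀, hf₁, hf₂]
      ring
  · intro t ht
    rw [hN] at ht
    have e1 : C 1 * t 0 + D 1 * t 1 = 0 := congrFun ht 1
    have e2 : C 2 * t 0 + D 2 * t 1 = 0 := congrFun ht 2
    have k0 : t 0 = 0 := (mul_eq_zero.1 (show f 0 * t 0 = 0 by
      rw [hf₀]; linear_combination D 2 * e1 - D 1 * e2)).resolve_left h₁
    have k1 : t 1 = 0 := (mul_eq_zero.1 (show f 0 * t 1 = 0 by
      rw [hf₀]; linear_combination C 1 * e2 - C 2 * e1)).resolve_left h₁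
    funext i
    fin_cases i
    · exact k0
    · exact k1

end Resolutions

/-! ### Three vectors with sum zero -/

section Triples

variable {V : Type*} [Fintype V]

lemma monomial_posExp_mul (k : Type*) [Field k] {b c : V → ℤ} {e : V →₀ ℕ}
    (hb : ∀ i, 0 ≤ b i) (hc : ∀ i, 0 ≤ c i) (h : ∀ i, (e i : ℤ) = b i + c i) :
    monomial (posExp b) (1 : k) * monomial (posExp c) 1 = monomial e 1 := by
  rw [monomial_mul, one_mul]
  refine congrArg (fun e => monomial e (1 : k)) (Finsupp.ext fun i => ?_)
  have h1 := h i
  have h2 := hb i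
  have h3 := hc i
  simp only [posExp, Finsupp.add_apply, Finsupp.equivFunOnFinite_symm_apply_apply]
  omega

/-- For `u + v + w = 0`, the binomials of `u`, `v`, `w` are the `2 × 2` minors of a `3 × 2` matrix
of monomials. In each coordinate, with `m` and `M` the minimum and maximum of `0`, `u`, `-w`, the
exponents are the differences between `m`, `M` and the pairwise minima and maxima. -/
lemma hasFreeResolution_triple (k : Type*) [Field k] {u v w : V → ℤ} (h : Indep u v)
    (hw : w = -(u + v)) :
    HasFreeResolutionOfLength k (Ideal.span {latticeBinomial k u, latticeBinomial k v,
      latticeBinomial k w}) 2 := by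
  let m : V → ℤ := fun i => min 0 (min (u i) (-w i))
  let M : V → ℤ := fun i => max 0 (max (u i) (-w i))
  let c₀ : V → ℤ := fun i => min 0 (u i) - m i
  let c₁ : V → ℤ := fun i => min (u i) (-w i) - m i
  let c₂ : V → ℤ := fun i => min 0 (-w i) - m i
  let d₀ : V → ℤ := fun i => M i - max 0 (u i)
  let d₁ : V → ℤ := fun i => M i - max (u i) (-w i)
  let d₂ : V → ℤ := fun i => M i - max 0 (-w i)
  have hc₀ : ∀ i, 0 ≤ c₀ i := fun i => by simp only [c₀, m]; omega
  have hc₁ : ∀ i, 0 ≤ c₁ i := fun i => by simp only [c₁, m]; omega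
  have hc₂ : ∀ i, 0 ≤ c₂ i := fun i => by simp only [c₂, m]; omega
  have hd₀ : ∀ i, 0 ≤ d₀ i := fun i => by simp only [d₀, M]; omega
  have hd₁ : ∀ i, 0 ≤ d₁ i := fun i => by simp only [d₁, M]; omega
  have hd₂ : ∀ i, 0 ≤ d₂ i := fun i => by simp only [d₂, M]; omega
  have hwi : ∀ i, w i = -(u i + v i) := fun i => by rw [hw]; rfl
  have hu0 : u ≠ 0 := by
    rintro rfl
    exact one_ne_zero (h 1 0 (by simp)).1
  have key := hasFreeResolution_minors k
    (C := ![monomial (posExp c₀) 1, monomial (posExp c₁) 1, monomial (posExp c₂) 1])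
    (D := ![monomial (posExp d₀) 1, monomial (posExp d₁) 1, monomial (posExp d₂) 1])
    (f := ![latticeBinomial k u, latticeBinomial k v, latticeBinomial k w])
    ?_ ?_ ?_ (latticeBinomial_ne_zero k hu0) fun g => latticeBinomial_dvd_of_dvd_mul k h
  · convert key using 2
    ext x
    simp only [Set.mem_insert_iff, Set.mem_singleton_iff, Matrix.range_cons, Matrix.range_empty,
      Set.union_empty, Set.singleton_union]
  · change latticeBinomial k u = monomial (posExp c₁) 1 * monomial (posExp d₂) 1 -
      monomial (posExp c₂) 1 * monomial (posExp d₁) 1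
    rw [monomial_posExp_mul k hc₁ hd₂ (e := posExp u), monomial_posExp_mul k hc₂ hd₁ (e := negExp u)]
    · rfl
    · intro i
      simp only [negExp, Finsupp.equivFunOnFinite_symm_apply_apply, c₂, d₁, m, M]
      omega
    · intro i
      simp only [posExp, Finsupp.equivFunOnFinite_symm_apply_apply, c₁, d₂, m, M]
      omega
  · change latticeBinomial k v = monomial (posExp c₂) 1 * monomial (posExp d₀) 1 -
      monomial (posExp c₀) 1 * monomial (posExp d₂) 1
    rw [monomial_posExp_mul k hc₂ hd₀ (e := posExp v), monomial_posExp_mul k hc₀ hd₂ (e := negExp v)]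
    · rfl
    · intro i
      have := hwi i
      simp only [negExp, Finsupp.equivFunOnFinite_symm_apply_apply, c₀, d₂, m, M]
      omega
    · intro i
      have := hwi i
      simp only [posExp, Finsupp.equivFunOnFinite_symm_apply_apply, c₂, d₀, m, M]
      omega
  · change latticeBinomial k w = monomial (posExp c₀) 1 * monomial (posExp d₁) 1 -
      monomial (posExp c₁) 1 * monomial (posExp d₀) 1
    rw [monomial_posExp_mul k hc₀ hd₁ (e := posExp w), monomial_posExp_mul k hc₁ hd₀ (e := negExp w)]
    · rfl
    · intro i
      simp only [negExp, Finsupp.equivFunOnFinite_symm_apply_apply, c₁, d₀, m, M]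
      omega
    · intro i
      simp only [posExp, Finsupp.equivFunOnFinite_symm_apply_apply, c₀, d₁, m, M]
      omega

end Triples

/-! ### Descent to a good triple -/

section Descent

variable {V : Type*} {L : Submodule ℤ (V → ℤ)} {u v : V → ℤ}

lemma IsPairBasis.neg_right (h : IsPairBasis L u v) : IsPairBasis L u (-v) where
  indep α β hαβ := by
    have := h.indep α (-β) (by rw [← hαβ]; module)
    exact ⟨this.1, neg_eq_zero.1 this.2⟩
  mem_iff w := (h.mem_iff w).trans
    ⟨fun ⟨α, β, e⟩ => ⟨α, -β, by rw [e]; module⟩, fun ⟨α, β, e⟩ => ⟨α, -β, by rw [e]; module⟩⟩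

lemma IsPairBasis.symm (h : IsPairBasis L u v) : IsPairBasis L v u where
  indep α β hαβ := (h.indep β α (by rw [← hαβ]; module)).symm
  mem_iff w := (h.mem_iff w).trans
    ⟨fun ⟨α, β, e⟩ => ⟨β, α, by rw [e]; module⟩, fun ⟨α, β, e⟩ => ⟨β, α, by rw [e]; module⟩⟩

lemma IsPairBasis.sub_right (h : IsPairBasis L u v) : IsPairBasis L u (v - u) where
  indep α β hαβ := by
    have := h.indep (α - β) β (by rw [← hαβ]; module)
    exact ⟨by omega, this.2⟩
  mem_iff w := (h.mem_iff w).trans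
    ⟨fun ⟨α, β, e⟩ => ⟨α + β, β, by rw [e]; module⟩,
      fun ⟨α, β, e⟩ => ⟨α - β, β, by rw [e]; module⟩⟩

lemma MissesDiagonal.symm (h : MissesDiagonal u v) : MissesDiagonal v u :=
  h.imp (fun h i hi => h i hi.symm) fun h i hi => h i hi.symm

lemma MissesDiagonal.neg (h : MissesDiagonal u v) : MissesDiagonal (-u) (-v) :=
  h.elim (fun h => Or.inr fun i hi => h i ⟨by simpa using hi.1, by simpa using hi.2⟩)
    fun h => Or.inl fun i hi => h i ⟨by simpa using hi.1, by simpa using hi.2⟩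

variable [Fintype V]

/-- The size of the part of the rows of `(u, v)` in the first open quadrant, which measures the
progress of the descent. -/
def quadrantSize (u v : V → ℤ) : ℕ :=
  ∑ i, if 0 < u i ∧ 0 < v i then (u i + v i).toNat else 0

lemma quadrantSize_comm (u v : V → ℤ) : quadrantSize u v = quadrantSize v u := by
  simp only [quadrantSize, and_comm, add_comm]

lemma quadrantSize_sub_lt (h : ¬ MissesDiagonal u v) :
    quadrantSize u (v - u) < quadrantSize u v := by
  simp only [MissesDiagonal, not_or, not_forall, not_not] at h
  obtain ⟨⟨i, hi⟩, -⟩ := h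
  refine Finset.sum_lt_sum (fun j _ => ?_) ⟨i, Finset.mem_univ i, ?_⟩
  · simp only [Pi.sub_apply]
    split_ifs <;> omega
  · simp only [Pi.sub_apply]
    split_ifs <;> omega

/-- If no basis of `L` meets all four quadrants, Euclid's algorithm applied to a basis meeting the
first and third quadrants ends in a triple of vectors with sum zero, any two of which form a basis
missing the first or third quadrant. -/
lemma exists_triple (H : ∀ u v : V → ℤ, IsPairBasis L u v →
      MissesDiagonal u v ∨ MissesDiagonal u (-v)) (N : ℕ) :
    ∀ u v : V → ℤ, IsPairBasis L u v → ¬ MissesDiagonal u v → quadrantSize u v < N →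
      ∃ a b c : V → ℤ, IsPairBasis L a b ∧ c = -(a + b) ∧ MissesDiagonal a b ∧
        MissesDiagonal a c ∧ MissesDiagonal b c := by
  induction N with
  | zero => intro u v _ _ h; omega
  | succ N ih =>
    intro u v hb hm hN
    have hneg := (H u v hb).resolve_left hm
    by_cases h1 : MissesDiagonal u (v - u)
    · by_cases h2 : MissesDiagonal v (u - v)
      · refine ⟨u, -v, v - u, hb.neg_right, by abel, hneg, h1, ?_⟩
        have := h2.neg
        rwa [neg_sub] at this
      · refine ih v (u - v) hb.symm.sub_right h2 ?_
        have := quadrantSize_sub_lt (fun h => hm h.symm)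
        rw [quadrantSize_comm v u] at this
        omega
    · refine ih u (v - u) hb.sub_right h1 ?_
      have := quadrantSize_sub_lt hm
      omega

lemma hasFreeResolution_of_triple (k : Type*) [Field k]
    (h : ∃ a b c : V → ℤ, IsPairBasis L a b ∧ c = -(a + b) ∧ MissesDiagonal a b ∧
        MissesDiagonal a c ∧ MissesDiagonal b c) :
    HasFreeResolutionOfLength k (latticeIdeal k L) 2 := by
  obtain ⟨a, b, c, hab, hc, h1, h2, h3⟩ := h
  rw [latticeIdeal_eq_span_triple k hab hc h1 h2 h3]
  exact hasFreeResolution_triple k hab.indep hc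

/-- If no basis of `L` meets all four open quadrants, then `k[x] / I_L` has a resolution of length
two: `I_L` is a complete intersection, or it is generated by the minors of a matrix of monomials. -/
lemma hasFreeResolution_of_missesDiagonal (k : Type*) [Field k] (hb : IsPairBasis L u v)
    (H : ∀ u v : V → ℤ, IsPairBasis L u v → MissesDiagonal u v ∨ MissesDiagonal u (-v)) :
    HasFreeResolutionOfLength k (latticeIdeal k L) 2 := by
  by_cases h1 : MissesDiagonal u v
  · by_cases h2 : MissesDiagonal u (-v)
    · rw [latticeIdeal_eq_span_pair k hb h1 h2]
      refine hasFreeResolution_span_pair k (latticeBinomial_ne_zero k ?_) fun g =>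
        latticeBinomial_dvd_of_dvd_mul k hb.indep
      rintro rfl
      exact one_ne_zero (hb.indep 1 0 (by simp)).1
    · exact hasFreeResolution_of_triple k
        (exists_triple H _ u (-v) hb.neg_right h2 (Nat.lt_succ_self _))
  · exact hasFreeResolution_of_triple k (exists_triple H _ u v hb h1 (Nat.lt_succ_self _))

end Descent

/-! ### Lattice bases as matrices and as pairs -/

section Bases

variable {n : ℕ} {L : Submodule ℤ (Fin n → ℤ)}

lemma isLatticeBasis_iff_isPairBasis (B : Matrix (Fin n) (Fin 2) ℤ) :
    IsLatticeBasis L B ↔ IsPairBasis L (fun i => B i 0) (fun i => B i 1) := by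
  have hmul : ∀ t : Fin 2 → ℤ,
      B.mulVecLin t = t 0 • (fun i => B i 0) + t 1 • (fun i => B i 1) := by
    intro t
    funext i
    simp [Matrix.mulVec, dotProduct, Fin.sum_univ_two, mul_comm]
  have hind : LinearIndependent ℤ (fun j : Fin 2 => fun i => B i j) ↔
      Indep (fun i => B i 0) (fun i => B i 1) := by
    have : (fun j : Fin 2 => fun i => B i j) = ![fun i => B i 0, fun i => B i 1] := by
      funext j
      fin_cases j <;> rfl
    rw [this, LinearIndependent.pair_iff]
    rfl
  have hspan : ∀ w, w ∈ colSpan B ↔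
      ∃ α β : ℤ, w = α • (fun i => B i 0) + β • (fun i => B i 1) := by
    intro w
    constructor
    · rintro ⟨t, rfl⟩
      exact ⟨t 0, t 1, hmul t⟩
    · rintro ⟨α, β, rfl⟩
      exact ⟨![α, β], hmul _⟩
  constructor
  · rintro ⟨h1, h2⟩
    exact ⟨hind.1 h1, fun w => by rw [← h2]; exact hspan w⟩
  · rintro ⟨h1, h2⟩
    exact ⟨hind.2 h1, by ext w; rw [hspan, h2]⟩

lemma exists_isPairBasis (hrank : latticeRank L = 2) : ∃ u v, IsPairBasis L u v := by
  have b : Module.Basis (Fin 2) ℤ L := Module.finBasisOfFinrankEq ℤ L hrank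
  refine ⟨b 0, b 1, fun α β h => ?_, fun w => ⟨fun hw => ?_, ?_⟩⟩
  · have h1 := b.linearIndependent
    rw [Fintype.linearIndependent_iff] at h1
    have h2 := h1 ![α, β] (by
      rw [Fin.sum_univ_two]
      exact Subtype.ext h)
    exact ⟨h2 0, h2 1⟩
  · have := b.sum_repr ⟨w, hw⟩
    rw [Fin.sum_univ_two] at this
    exact ⟨_, _, (congrArg Subtype.val this).symm⟩
  · rintro ⟨α, β, rfl⟩
    exact L.add_mem (L.smul_mem _ (b 0).2) (L.smul_mem _ (b 1).2)

end Bases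

/-- Theorem `thm:codim2CM`(2): for a positive lattice `L ⊆ ℤⁿ` of
rank 2, `k[x]/I_L` is **not** Cohen–Macaulay iff `L` has a Gale diagram meeting all
four open quadrants of `ℝ²`. -/
theorem statement2 (k : Type*) [Field k] {n : ℕ} (L : Submodule ℤ (Fin n → ℤ))
    (hpos : IsPositiveLattice L) (hrank : latticeRank L = 2) :
    ¬ IsCMLatticeQuotient k L ↔
      ∃ B : Matrix (Fin n) (Fin 2) ℤ, IsLatticeBasis L B ∧ MeetsFourQuadrants B := by
  rw [IsCMLatticeQuotient, hrank]
  constructor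
  · intro hCM
    by_contra hB
    obtain ⟨u, v, huv⟩ := exists_isPairBasis hrank
    refine hCM (hasFreeResolution_of_missesDiagonal k huv fun a b hab => ?_)
    by_contra hm
    simp only [MissesDiagonal, not_or, not_forall, not_not, Pi.neg_apply, Left.neg_pos_iff,
      Left.neg_neg_iff] at hm
    obtain ⟨⟨h1, h2⟩, h3, h4⟩ := hm
    exact hB ⟨Matrix.of fun i j => ![a i, b i] j,
      (isLatticeBasis_iff_isPairBasis _).2 hab, h1, h3, h4, h2⟩
  · rintro ⟨B, hB, ⟨p, hp⟩, ⟨q, hq⟩, ⟨r, hr⟩, ⟨s, hs⟩⟩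
    exact not_resolution_of_quadrants k ((isLatticeBasis_iff_isPairBasis B).1 hB).mem_iff
      hp hq hr hs
end

section
/- Let B ∈ ℤ^{4×2} be a matrix of rank 2 whose four rows meet all four open quadrants of ℝ² (one row in each open quadrant). Then there exists a nonsingular matrix M ∈ ℤ^{2×2} such that the Gale diagram G_{BM} (the set of rows of BM) is imbalanced. -/
/-!
Call the rows `p₁, p₂, p₃, p₄`, lying in the quadrants `(+,+)`, `(-,+)`, `(-,-)`, `(+,-)`.
The linear form `g = det(p₄, ·)` vanishes at `p₄`, is positive at `p₁` and negative at `p₃`.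
Hence, depending on the sign of `g(p₂)`, one of `g`, `-g` is nonnegative on every row except
exactly one row `q`, which is `p₃` or `p₁`. With `f = det(q, ·)`, the matrix `M` whose columns
are the coefficients of `f` and `±g` makes `B * M` imbalanced: the first entry vanishes in the
row `q` and the second is nonnegative in all others. Since `f(q) = 0` and `g(q) ≠ 0`, the forms
are independent, so `M` is nonsingular.
-/

open MvPolynomial

/-- Proposition `prop:4x2nonCMtoCM`: for any `4 × 2` integer matrix
`B` of rank 2 whose rows meet all four open quadrants of `ℝ²`, there is a nonsingular
`2 × 2` integer matrix `M` such that the Gale diagram `G_{BM}` is imbalanced. -/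
theorem statement3 (B : Matrix (Fin 4) (Fin 2) ℤ) (hrank : B.rank = 2)
    (hquad : MeetsFourQuadrants B) :
    ∃ M : Matrix (Fin 2) (Fin 2) ℤ, M.det ≠ 0 ∧ Imbalanced (B * M) := by
  obtain ⟨⟨i₁, h₁x, h₁y⟩, ⟨i₄, h₄x, h₄y⟩, ⟨i₂, h₂x, h₂y⟩, ⟨i₃, h₃x, h₃y⟩⟩ := hquad
  -- The chosen rows lie in disjoint quadrants, so they are distinct and exhaust `Fin 4`.
  have hcover : ∀ i, i = i₁ ∨ i = i₂ ∨ i = i₃ ∨ i = i₄ := by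
    have h12 : i₁ ≠ i₂ := by rintro rfl; omega
    have h13 : i₁ ≠ i₃ := by rintro rfl; omega
    have h14 : i₁ ≠ i₄ := by rintro rfl; omega
    have h23 : i₂ ≠ i₃ := by rintro rfl; omega
    have h24 : i₂ ≠ i₄ := by rintro rfl; omega
    have h34 : i₃ ≠ i₄ := by rintro rfl; omega
    intro i
    omega
  rcases le_or_gt 0 (B i₄ 0 * B i₂ 1 - B i₄ 1 * B i₂ 0) with hg | hg
  · refine ⟨!![-B i₃ 1, -B i₄ 1; B i₃ 0, B i₄ 0], ?_, fun i => ?_⟩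
    · rw [Matrix.det_fin_two_of]
      nlinarith [mul_pos (neg_pos.2 h₃y) h₄x, mul_pos_of_neg_of_neg h₃x h₄y]
    · simp only [Matrix.mul_apply, Fin.sum_univ_two, Matrix.of_apply, Matrix.cons_val_zero,
        Matrix.cons_val_one]
      rcases hcover i with rfl | rfl | rfl | rfl
      · right; nlinarith [mul_pos h₁x (neg_pos.2 h₄y), mul_pos h₁y h₄x]
      · right; linarith
      · left; ring
      · right; linarith
  · refine ⟨!![-B i₁ 1, B i₄ 1; B i₁ 0, -B i₄ 0], ?_, fun i => ?_⟩
    · rw [Matrix.det_fin_two_of]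
      nlinarith [mul_pos h₁x (neg_pos.2 h₄y), mul_pos h₁y h₄x]
    · simp only [Matrix.mul_apply, Fin.sum_univ_two, Matrix.of_apply, Matrix.cons_val_zero,
        Matrix.cons_val_one]
      rcases hcover i with rfl | rfl | rfl | rfl
      · left; ring
      · right; linarith
      · right; nlinarith [mul_pos (neg_pos.2 h₃y) h₄x, mul_pos_of_neg_of_neg h₃x h₄y]
      · right; linarith
end

section
/- Let B ∈ ℤ^{n×2} be a matrix of rank 2 with no zero rows such that ℤB is a positive lattice and the Gale diagram G_B is imbalanced. Then there exists a nonsingular matrix M ∈ ℤ^{2×2} such that the set of rows of BM meets all four open quadrants of ℝ² if and only if the rows of B span more than three distinct rays in ℝ². -/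
/-!
An imbalanced diagram lies in the union of the closed upper half plane and the ray `D` spanned by
`(0, -1)`. Positivity and rank two force rows on `D`, rows with negative
first coordinate (the left side) and rows with positive first coordinate (the right side).

If `BM` meets all four open quadrants, then rows in different quadrants span different rays, and
`M` cannot separate rows that span the same ray, so `B` has at least four rays.

Conversely, unless there is a row on the positive vertical axis, or two rows on the same side with
different directions, all rows lie on `D`, one left ray and one right ray. In each exceptional case
there are four rows in cyclic order `D, v, w, z`, and the columns of `M` are integral linear forms
separating `{D, v}` from `{w, z}` and `{v, w}` from `{z, D}` (`exists_quadrants_of_up`,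
`exists_quadrants_of_left`, `exists_quadrants_of_right`).
-/


open MvPolynomial

/-- The ray in `ℝ²` spanned by the `i`-th row of `B`. -/
def rowRay {n : ℕ} (B : Matrix (Fin n) (Fin 2) ℤ) (i : Fin n) : Set (Fin 2 → ℝ) :=
  {w | ∃ t : ℝ, 0 ≤ t ∧ w = t • (fun j => (B i j : ℝ))}

lemma rowRay_subset {n : ℕ} (B : Matrix (Fin n) (Fin 2) ℤ) {i j : Fin n} {s : ℝ} (hs : 0 ≤ s)
    (h : ∀ k, (B i k : ℝ) = s * B j k) : rowRay B i ⊆ rowRay B j := by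
  rintro w ⟨t, ht, rfl⟩
  refine ⟨t * s, mul_nonneg ht hs, ?_⟩
  ext k
  simp [h k, mul_assoc]

lemma rowRay_eq {n : ℕ} (B : Matrix (Fin n) (Fin 2) ℤ) {i j : Fin n} {s : ℝ} (hs : 0 < s)
    (h : ∀ k, (B i k : ℝ) = s * B j k) : rowRay B i = rowRay B j := by
  apply (rowRay_subset B hs.le h).antisymm
  refine rowRay_subset B (inv_pos.2 hs).le (s := s⁻¹) fun k => ?_
  rw [h k, inv_mul_cancel_left₀ hs.ne']

lemma rowRay_eq_of_parallel {n : ℕ} (B : Matrix (Fin n) (Fin 2) ℤ) {i j : Fin n}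
    (h0 : 0 < B i 0 * B j 0) (h : B i 0 * B j 1 = B j 0 * B i 1) :
    rowRay B i = rowRay B j := by
  have h0' : (0 : ℝ) < (B i 0 : ℝ) * B j 0 := by exact_mod_cast h0
  have h' : (B i 0 : ℝ) * B j 1 = B j 0 * B i 1 := by exact_mod_cast h
  have hj : (B j 0 : ℝ) ≠ 0 := right_ne_zero_of_mul h0'.ne'
  refine rowRay_eq B (s := (B i 0 : ℝ) / B j 0) ?_ fun k => ?_
  · rw [← mul_div_mul_right _ _ hj]
    exact div_pos h0' (mul_self_pos.2 hj)
  · fin_cases k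
    · simp [hj]
    · simp only [Fin.mk_one]
      field_simp
      linarith

lemma rowRay_eq_of_down {n : ℕ} (B : Matrix (Fin n) (Fin 2) ℤ) {i j : Fin n}
    (hi0 : B i 0 = 0) (hj0 : B j 0 = 0) (hi : B i 1 < 0) (hj : B j 1 < 0) :
    rowRay B i = rowRay B j := by
  have hi' : (B i 1 : ℝ) < 0 := by exact_mod_cast hi
  have hj' : (B j 1 : ℝ) < 0 := by exact_mod_cast hj
  refine rowRay_eq B (s := (B i 1 : ℝ) / B j 1) (div_pos_of_neg_of_neg hi' hj') fun k => ?_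
  fin_cases k
  · simp [hi0, hj0]
  · simp [hj'.ne]

/-- Rows spanning the same ray cannot be separated by a linear form. -/
lemma rowRay_ne {n : ℕ} (B : Matrix (Fin n) (Fin 2) ℤ) (M : Matrix (Fin 2) (Fin 2) ℤ)
    {i j : Fin n} (k : Fin 2) (hi : 0 < (B * M) i k) (hj : (B * M) j k < 0) :
    rowRay B i ≠ rowRay B j := by
  intro h
  have hmem : (fun k => (B i k : ℝ)) ∈ rowRay B i := ⟨1, zero_le_one, by simp⟩
  rw [h] at hmem
  obtain ⟨t, ht, he⟩ := hmem
  have e0 : (B i 0 : ℝ) = t * B j 0 := by simpa using congrFun he 0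
  have e1 : (B i 1 : ℝ) = t * B j 1 := by simpa using congrFun he 1
  rw [Matrix.mul_apply, Fin.sum_univ_two] at hi hj
  have hi' : (0 : ℝ) < B i 0 * M 0 k + B i 1 * M 1 k := by exact_mod_cast hi
  have hj' : (B j 0 * M 0 k + B j 1 * M 1 k : ℝ) < 0 := by exact_mod_cast hj
  rw [e0, e1] at hi'
  nlinarith

/-- If `B` has rank two and `ℤB` is positive, then both columns of `B` are mixed in sign: every
nonzero multiple `c` of the column `k` has a negative entry. -/
lemma exists_neg {n : ℕ} (B : Matrix (Fin n) (Fin 2) ℤ) (hrank : B.rank = 2)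
    (hpos : IsPositiveLattice (colSpan B)) (k : Fin 2) (c : ℤ) (hc : c ≠ 0) :
    ∃ i, c * B i k < 0 := by
  by_contra! hcon
  have hv : B.mulVec (Pi.single k c) = fun i => c * B i k := by
    ext i
    simp [Matrix.mulVec_single, mul_comm]
  have hz := hpos (B.mulVec (Pi.single k c)) ⟨_, rfl⟩ (by rw [hv]; exact hcon)
  have hk : ∀ i, B i k = 0 := fun i => by
    have := congrFun hz i
    rw [hv] at this
    simpa [hc] using this
  -- A matrix with two columns, one of them zero, is an outer product and has rank at most one.
  have hB : B = Matrix.vecMulVec (fun i => B i (1 - k)) (Pi.single (1 - k) 1) := by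
    ext i j
    fin_cases k <;> fin_cases j <;> simp_all [Matrix.vecMulVec_apply]
  have := Matrix.rank_vecMulVec_le (fun i => B i (1 - k)) (Pi.single (1 - k) (1 : ℤ))
  rw [← hB] at this
  omega

lemma exists_quadrants_of_up {n : ℕ} (B : Matrix (Fin n) (Fin 2) ℤ) {d r u l : Fin n}
    (hd0 : B d 0 = 0) (hd : B d 1 < 0) (hr0 : 0 < B r 0) (hr : 0 ≤ B r 1)
    (hu0 : B u 0 = 0) (hu : 0 < B u 1) (hl0 : B l 0 < 0) (hl : 0 ≤ B l 1) :
    ∃ M : Matrix (Fin 2) (Fin 2) ℤ, M.det ≠ 0 ∧ MeetsFourQuadrants (B * M) := by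
  -- The two forms `P x - y` and `P x + y` with `P` large have steep kernels.
  refine ⟨!![1 + B r 1 + B l 1, 1 + B r 1 + B l 1; -1, 1], ?_, ⟨r, ?_⟩, ⟨d, ?_⟩, ⟨u, ?_⟩, ⟨l, ?_⟩⟩
  · rw [Matrix.det_fin_two_of]; omega
  all_goals
    simp only [Matrix.mul_apply, Fin.sum_univ_two, Matrix.of_apply, Matrix.cons_val',
      Matrix.cons_val_zero, Matrix.cons_val_one, Matrix.cons_val_fin_one]
    constructor <;> nlinarith

lemma exists_quadrants_of_left {n : ℕ} (B : Matrix (Fin n) (Fin 2) ℤ) {d r v w : Fin n}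
    (hd0 : B d 0 = 0) (hd : B d 1 < 0) (hr0 : 0 < B r 0) (hr : 0 ≤ B r 1)
    (hv0 : B v 0 < 0) (hv : 0 ≤ B v 1) (hw0 : B w 0 < 0) (hw : 0 ≤ B w 1)
    (hvw : B v 0 * B w 1 < B w 0 * B v 1) :
    ∃ M : Matrix (Fin 2) (Fin 2) ℤ, M.det ≠ 0 ∧ MeetsFourQuadrants (B * M) := by
  have hw' : 0 < B w 1 := by
    by_contra! h
    nlinarith [le_antisymm h hw, mul_nonneg (neg_nonneg.2 hw0.le) hv]
  -- The second form vanishes on the sum of the two left rows, hence separates them.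
  refine ⟨!![1 + B r 1, B v 1 + B w 1; -1, -(B v 0 + B w 0)], ?_,
    ⟨r, ?_⟩, ⟨d, ?_⟩, ⟨w, ?_⟩, ⟨v, ?_⟩⟩
  · rw [Matrix.det_fin_two_of]
    nlinarith
  all_goals
    simp only [Matrix.mul_apply, Fin.sum_univ_two, Matrix.of_apply, Matrix.cons_val',
      Matrix.cons_val_zero, Matrix.cons_val_one, Matrix.cons_val_fin_one]
    constructor <;> nlinarith

/-- The mirror image of `exists_quadrants_of_left` in the vertical axis. -/
lemma exists_quadrants_of_right {n : ℕ} (B : Matrix (Fin n) (Fin 2) ℤ) {d l v w : Fin n}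
    (hd0 : B d 0 = 0) (hd : B d 1 < 0) (hl0 : B l 0 < 0) (hl : 0 ≤ B l 1)
    (hv0 : 0 < B v 0) (hv : 0 ≤ B v 1) (hw0 : 0 < B w 0) (hw : 0 ≤ B w 1)
    (hvw : B w 0 * B v 1 < B v 0 * B w 1) :
    ∃ M : Matrix (Fin 2) (Fin 2) ℤ, M.det ≠ 0 ∧ MeetsFourQuadrants (B * M) := by
  let N : Matrix (Fin 2) (Fin 2) ℤ := !![-1, 0; 0, 1]
  have h0 : ∀ i, (B * N) i 0 = -B i 0 := fun i => by simp [N, Matrix.mul_apply]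
  have h1 : ∀ i, (B * N) i 1 = B i 1 := fun i => by simp [N, Matrix.mul_apply]
  obtain ⟨M, hM, hq⟩ := exists_quadrants_of_left (B * N) (d := d) (r := l) (v := v) (w := w)
    (by rw [h0]; omega) (by rwa [h1]) (by rw [h0]; omega) (by rwa [h1]) (by rw [h0]; omega)
    (by rwa [h1]) (by rw [h0]; omega) (by rwa [h1]) (by rw [h0, h0, h1, h1]; linarith)
  refine ⟨N * M, ?_, by rwa [← Matrix.mul_assoc]⟩
  rw [Matrix.det_mul]
  exact mul_ne_zero (by simp [N]) hM

/-- Proposition `CItononCMcodim2`: let `B` be an `n × 2` integer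
matrix of rank 2 with no zero rows, with `ℤB` positive and `G_B` imbalanced.  There is
a nonsingular `2 × 2` integer matrix `M` with `G_{BM}` meeting all four open quadrants
of `ℝ²` iff the rows of `B` span more than three rays. -/
theorem statement4 {n : ℕ} (B : Matrix (Fin n) (Fin 2) ℤ) (hrank : B.rank = 2)
    (hrows : ∀ i, ∃ j, B i j ≠ 0) (hpos : IsPositiveLattice (colSpan B))
    (himb : Imbalanced B) :
    (∃ M : Matrix (Fin 2) (Fin 2) ℤ, M.det ≠ 0 ∧ MeetsFourQuadrants (B * M)) ↔
      3 < Set.ncard (Set.range fun i : Fin n =>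
        {w : Fin 2 → ℝ | ∃ t : ℝ, 0 ≤ t ∧ w = t • (fun j => (B i j : ℝ))}) := by
  change _ ↔ 3 < Set.ncard (Set.range (rowRay B))
  constructor
  · rintro ⟨M, -, ⟨a, ha0, ha1⟩, ⟨b, hb0, hb1⟩, ⟨c, hc0, hc1⟩, ⟨d, hd0, hd1⟩⟩
    have hab := rowRay_ne B M 1 ha1 hb1
    have hac := rowRay_ne B M 0 ha0 hc0
    have had := rowRay_ne B M 0 ha0 hd0
    have hbc := rowRay_ne B M 0 hb0 hc0
    have hbd := rowRay_ne B M 0 hb0 hd0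
    have hcd := rowRay_ne B M 1 hc1 hd1
    have hsub : ({rowRay B a, rowRay B b, rowRay B c, rowRay B d} : Set (Set (Fin 2 → ℝ))) ⊆
        Set.range (rowRay B) := by
      rintro _ (rfl | rfl | rfl | rfl) <;> exact ⟨_, rfl⟩
    have hle := Set.ncard_le_ncard hsub (Set.finite_range _)
    rw [Set.ncard_insert_of_notMem (by simp [hab, hac, had]),
      Set.ncard_insert_of_notMem (by simp [hbc, hbd]), Set.ncard_pair hcd] at hle
    omega
  · intro hcard
    obtain ⟨d, hd⟩ := exists_neg B hrank hpos 1 1 one_ne_zero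
    obtain ⟨l, hl0⟩ := exists_neg B hrank hpos 0 1 one_ne_zero
    obtain ⟨r, hr0⟩ := exists_neg B hrank hpos 0 (-1) (by norm_num)
    have hd : B d 1 < 0 := by omega
    have hl0 : B l 0 < 0 := by omega
    have hr0 : 0 < B r 0 := by omega
    have hd0 : B d 0 = 0 := by have := himb d; omega
    have side : ∀ i, B i 0 ≠ 0 → 0 ≤ B i 1 := fun i hi => (himb i).resolve_left hi
    have hl := side l hl0.ne
    have hr := side r hr0.ne'
    by_contra hno
    have hsub : Set.range (rowRay B) ⊆ {rowRay B d, rowRay B l, rowRay B r} := by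
      rintro _ ⟨i, rfl⟩
      rcases lt_trichotomy (B i 0) 0 with hi | hi | hi
      · refine Or.inr (Or.inl (rowRay_eq_of_parallel B (mul_pos_of_neg_of_neg hi hl0) ?_))
        have hi1 := side i hi.ne
        rcases lt_trichotomy (B i 0 * B l 1) (B l 0 * B i 1) with h | h | h
        · exact absurd (exists_quadrants_of_left B hd0 hd hr0 hr hi hi1 hl0 hl h) hno
        · exact h
        · exact absurd (exists_quadrants_of_left B hd0 hd hr0 hr hl0 hl hi hi1 h) hno
      · have hi1 : B i 1 ≠ 0 := by
          obtain ⟨j, hj⟩ := hrows i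
          fin_cases j
          · exact absurd hi hj
          · exact hj
        rcases lt_or_gt_of_ne hi1 with h | h
        · exact Or.inl (rowRay_eq_of_down B hi hd0 h hd)
        · exact absurd (exists_quadrants_of_up B hd0 hd hr0 hr hi h hl0 hl) hno
      · refine Or.inr (Or.inr (rowRay_eq_of_parallel B (mul_pos hi hr0) ?_))
        have hi1 := side i hi.ne'
        rcases lt_trichotomy (B i 0 * B r 1) (B r 0 * B i 1) with h | h | h
        · exact absurd (exists_quadrants_of_right B hd0 hd hl0 hl hr0 hr hi hi1 h) hno
        · exact h
        · exact absurd (exists_quadrants_of_right B hd0 hd hl0 hl hi hi1 hr0 hr h) hno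
    have h1 := Set.ncard_le_ncard hsub (Set.toFinite _)
    have h2 := Set.ncard_insert_le (rowRay B d) {rowRay B l, rowRay B r}
    have h3 := Set.ncard_insert_le (rowRay B l) {rowRay B r}
    rw [Set.ncard_singleton] at h3
    omega
end
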